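/- arXiv:2306.07161 — 2 statements merged into one kernel-verified Lean document; each statement's English description precedes it below -/
import Mathlib

section
/- Fix integers d ≥ 17 and x such that 1 + ⌈3d/2⌉ < x < 2d. Then T(3,d;x)' = ∅. -/
open MvPolynomial

noncomputable section

/-- Projective `n`-space over `k`, as the projectivization of `k^(n+1)`. -/
abbrev ProjSpace (k : Type*) [Field k] (n : ℕ) := Projectivization k (Fin (n+1) → k)

variable (k : Type*) [Field k]

/-- Evaluation at a vector, as a linear map on polynomials. -/
def evalLM {n : ℕ} (v : Fin n → k) : MvPolynomial (Fin n) k →ₗ[k] k :=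
  (MvPolynomial.aeval v).toLinearMap

/-- The submodule of polynomials vanishing together with all first partial derivatives at `v`. -/
def doubleVanishing {n : ℕ} (v : Fin n → k) : Submodule k (MvPolynomial (Fin n) k) :=
  LinearMap.ker (evalLM k v) ⊓
    ⨅ i : Fin n, LinearMap.ker ((evalLM k v).comp (MvPolynomial.pderiv i).toLinearMap)

/-- `h^0(I_{2S}(d))`: dimension of degree-`d` forms vanishing doubly at all points of `S`. -/
def h0 (n d : ℕ) (S : Finset (ProjSpace k n)) : ℕ :=
  Module.finrank k
    ↥(homogeneousSubmodule (Fin (n+1)) k d ⊓ ⨅ p ∈ S, doubleVanishing k p.rep)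

/-- `h^1(I_{2S}(d)) = h^0(I_{2S}(d)) + (n+1)#S - C(n+d,n)`. -/
def h1 (n d : ℕ) (S : Finset (ProjSpace k n)) : ℤ :=
  (h0 k n d S : ℤ) + (n+1) * S.card - (n+d).choose n

/-- `S` spans `P^n`: it is contained in no hyperplane. -/
def Spans (n : ℕ) (S : Finset (ProjSpace k n)) : Prop :=
  Submodule.span k (Projectivization.rep '' (S : Set (ProjSpace k n))) = ⊤

/-- The Terracini locus `T(n,d;x)`. -/
def Terracini (n d x : ℕ) : Set (Finset (ProjSpace k n)) :=
  {S | S.card = x ∧ Spans k n S ∧ 0 < h0 k n d S ∧ 0 < h1 k n d S}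

/-- The minimally Terracini locus `T(n,d;x)'`. -/
def minTerracini (n d x : ℕ) : Set (Finset (ProjSpace k n)) :=
  {S | S ∈ Terracini k n d x ∧ ∀ A : Finset (ProjSpace k n), A ⊂ S → h1 k n d A = 0}

end


section Filtration

open Module

variable {k O : Type*} [Field k] [CommRing O] [Algebra k O]

/-- A finite family of proper annihilator conditions on `U` can be avoided. -/
lemma exists_avoid [Infinite k] (U : Submodule k O) {ι : Type*} [Finite ι]
    (p : ι → Submodule k O) (hp : ∀ i, ¬ U ≤ p i) : ∃ y ∈ U, ∀ i, y ∉ p i := by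
  by_contra hcon
  push Not at hcon
  have hcov : ⋃ i, (((p i).comap U.subtype : Submodule k U) : Set U) = Set.univ := by
    ext ⟨y, hy⟩
    simpa using hcon y hy
  obtain ⟨i, hi⟩ := Subspace.exists_eq_top_of_iUnion_eq_univ hcov
  apply hp i
  intro y hy
  have : (⟨y, hy⟩ : U) ∈ (p i).comap U.subtype := by rw [hi]; trivial
  simpa using this

lemma pow_mono_of_one_mem (U : Submodule k O) (h1 : (1 : O) ∈ U) {a b : ℕ} (hab : a ≤ b) :
    U ^ a ≤ U ^ b := by
  obtain ⟨c, rfl⟩ := Nat.exists_eq_add_of_le hab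
  intro x hx
  rw [pow_add]
  have h := Submodule.mul_mem_mul hx (Submodule.pow_mem_pow U h1 c)
  simpa using h

/-- The sequential choice behind the growth bound. -/
lemma exists_sequence [Infinite k] (U : Submodule k O) (t : ℕ)
    (F : O → Dual k O) (hF : ∀ y ∈ U, ∃ g ∈ U ^ t, F y g ≠ 0) (j : ℕ) (hj : j ≤ t) :
    ∃ y : ℕ → O, (∀ i ≤ j, y i ∈ U) ∧ ∀ i ≤ j, ∃ g ∈ U ^ (t - (j - i)),
      F (y i) ((∏ m ∈ Finset.Ioc i j, y m) * g) ≠ 0 := by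
  induction j with
  | zero =>
    refine ⟨fun _ => 0, fun i _ => U.zero_mem, fun i hi => ?_⟩
    obtain rfl : i = 0 := by omega
    simpa using hF 0 U.zero_mem
  | succ j ih =>
    obtain ⟨y, hyU, hy⟩ := ih (by omega)
    let bad : Fin (j + 1) → Submodule k O := fun i =>
      { carrier := {a | ∀ g ∈ U ^ (t - (j + 1 - i.1)),
          F (y i) ((∏ m ∈ Finset.Ioc i.1 j, y m) * (a * g)) = 0}
        add_mem' := by
          intro a b ha hb g hg
          rw [add_mul, mul_add, map_add, ha g hg, hb g hg, add_zero]
        zero_mem' := by intro g _; simp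
        smul_mem' := by
          intro c a ha g hg
          rw [smul_mul_assoc, mul_smul_comm, map_smul, ha g hg, smul_zero] }
    obtain ⟨a, haU, ha⟩ := exists_avoid U bad (by
      intro i hle
      obtain ⟨g, hg, hne⟩ := hy i.1 (by omega)
      apply hne
      have hexp : t - (j - i.1) = 1 + (t - (j + 1 - i.1)) := by omega
      rw [hexp, pow_add, pow_one] at hg
      refine Submodule.mul_induction_on hg (fun a ha b hb => hle ha b hb) ?_
      intro x y' hx hy'
      rw [mul_add, map_add, hx, hy', add_zero])
    refine ⟨Function.update y (j + 1) a, ?_, ?_⟩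
    · intro i hi
      by_cases h : i = j + 1
      · subst h; simpa using haU
      · rw [Function.update_of_ne h]; exact hyU i (by omega)
    · intro i hi
      by_cases h : i = j + 1
      · subst h; simpa using hF a haU
      · have hi' : i ≤ j := by omega
        have := ha ⟨i, by omega⟩
        simp only [bad, Submodule.mem_mk, AddSubmonoid.mem_mk, AddSubsemigroup.mem_mk,
          Set.mem_ofPred_eq, not_forall] at this
        obtain ⟨g, hg, hne⟩ := this
        refine ⟨g, hg, ?_⟩
        rw [Function.update_of_ne h]
        have hprod : ∏ m ∈ Finset.Ioc i (j + 1), Function.update y (j + 1) a m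
            = (∏ m ∈ Finset.Ioc i j, y m) * a := by
          rw [Finset.prod_Ioc_succ_top (by omega)]
          simp only [Function.update_self]
          congr 1
          apply Finset.prod_congr rfl
          intro m hm
          rw [Finset.mem_Ioc] at hm
          rw [Function.update_of_ne (by omega)]
        rw [hprod, mul_assoc]
        exact hne

lemma prod_mem_pow (U : Submodule k O) (s : Finset ℕ) (y : ℕ → O) (h : ∀ i ∈ s, y i ∈ U) :
    ∏ i ∈ s, y i ∈ U ^ s.card := by
  classical
  induction s using Finset.induction_on with
  | empty => simpa using ⟨(1 : k), map_one (algebraMap k O)⟩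
  | insert a s ha ih =>
    rw [Finset.prod_insert ha, Finset.card_insert_of_notMem ha, pow_succ']
    exact Submodule.mul_mem_mul (h a (by simp)) (ih fun i hi => h i (by simp [hi]))

/-- Macaulay and Green type bound: if the `t`-th difference is at most `t`, then a single
element of `U` generates the top degree part. -/
lemma exists_generator [Infinite k] [FiniteDimensional k O] (U : Submodule k O) (h1 : (1 : O) ∈ U)
    (t : ℕ) (ht : 1 ≤ t)
    (hh : finrank k ↥(U ^ t) ≤ finrank k ↥(U ^ (t - 1)) + t) :
    ∃ y ∈ U, U ^ t ≤ U ^ (t - 1) ⊔ (U ^ (t - 1)).map (LinearMap.mulLeft k y) := by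
  by_contra hcon
  push Not at hcon
  have hF : ∀ y : O, ∃ F : Dual k O, y ∈ U → ((∃ g ∈ U ^ t, F g ≠ 0) ∧
      (∀ g ∈ U ^ (t - 1), F g = 0) ∧ ∀ g ∈ U ^ (t - 1), F (y * g) = 0) := by
    intro y
    by_cases hy : y ∈ U
    · obtain ⟨g, hg, hg'⟩ := SetLike.not_le_iff_exists.mp (hcon y hy)
      obtain ⟨f, hf, hker⟩ := Submodule.exists_le_ker_of_notMem hg'
      refine ⟨f, fun _ => ⟨⟨g, hg, hf⟩, fun a ha => ?_, fun a ha => ?_⟩⟩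
      · exact hker (Submodule.mem_sup_left ha)
      · exact hker (Submodule.mem_sup_right ⟨a, ha, rfl⟩)
    · exact ⟨0, fun h => absurd h hy⟩
  choose F hF using hF
  obtain ⟨y, hyU, hy⟩ := exists_sequence U t F (fun y hy => (hF y hy).1) t le_rfl
  have hy' : ∀ i : Fin (t + 1), ∃ a ∈ U ^ t, F (y i) a ≠ 0 ∧
      ∀ j : Fin (t + 1), i < j → F (y j) a = 0 := by
    intro i
    obtain ⟨g, hg, hne⟩ := hy i.1 (by omega)
    have hi : t - (t - i.1) = i.1 := by omega
    rw [hi] at hg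
    refine ⟨_, ?_, hne, ?_⟩
    · have := Submodule.mul_mem_mul (prod_mem_pow U (Finset.Ioc i.1 t) y (by
        intro m hm; exact hyU m (Finset.mem_Ioc.mp hm).2)) hg
      rw [← pow_add, Nat.card_Ioc] at this
      have h2 : t - i.1 + i.1 = t := by omega
      rwa [h2] at this
    · intro j hij
      have hj : j.1 ∈ Finset.Ioc i.1 t := Finset.mem_Ioc.mpr ⟨hij, by omega⟩
      rw [← Finset.mul_prod_erase _ _ hj, mul_assoc]
      refine (hF (y j) (hyU _ (by omega))).2.2 _ ?_
      have := Submodule.mul_mem_mul (prod_mem_pow U ((Finset.Ioc i.1 t).erase j.1) y (by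
        intro m hm; exact hyU m (Finset.mem_Ioc.mp (Finset.mem_of_mem_erase hm)).2)) hg
      rw [← pow_add, Finset.card_erase_of_mem hj, Nat.card_Ioc] at this
      have h2 : t - i.1 - 1 + i.1 = t - 1 := by
        have : i.1 < j.1 := hij
        omega
      rwa [h2] at this
  choose a haU hane ha0 using hy'
  let M : Matrix (Fin (t + 1)) (Fin (t + 1)) k := Matrix.of fun i j => F (y j) (a i)
  have hdet : M.det ≠ 0 := by
    have htri : M.BlockTriangular OrderDual.toDual := by
      intro i j hij
      exact ha0 i j hij
    rw [Matrix.det_of_isLowerTriangular M htri]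
    exact Finset.prod_ne_zero_iff.mpr fun i _ => hane i
  let T : ↥(U ^ t) →ₗ[k] (Fin (t + 1) → k) :=
    LinearMap.pi fun j => (F (y j)).comp (U ^ t).subtype
  have hsurj : Function.Surjective T := by
    intro c
    have hu : IsUnit M.det := isUnit_iff_ne_zero.mpr hdet
    refine ⟨∑ i, (Matrix.vecMul c M⁻¹) i • ⟨a i, haU i⟩, ?_⟩
    have : Matrix.vecMul (Matrix.vecMul c M⁻¹) M = c := by
      rw [Matrix.vecMul_vecMul, Matrix.nonsing_inv_mul _ hu, Matrix.vecMul_one]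
    conv_rhs => rw [← this]
    ext j
    simp [T, Matrix.vecMul, dotProduct, M]
  have hle : U ^ (t - 1) ≤ U ^ t := pow_mono_of_one_mem U h1 (by omega)
  have hker : (U ^ (t - 1)).comap (U ^ t).subtype ≤ LinearMap.ker T := by
    rintro ⟨x, hx⟩ hx'
    rw [LinearMap.mem_ker]
    ext j
    exact (hF (y j) (hyU _ (by omega))).2.1 x hx'
  have h2 := LinearMap.finrank_range_add_finrank_ker T
  rw [LinearMap.range_eq_top.mpr hsurj, finrank_top] at h2
  have h3 := Submodule.finrank_mono hker
  have h4 : finrank k ↥((U ^ (t - 1)).comap (U ^ t).subtype) = finrank k ↥(U ^ (t - 1)) :=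
    (Submodule.comapSubtypeEquivOfLe hle).finrank_eq
  simp only [finrank_fintype_fun_eq_card, Fintype.card_fin] at h2
  omega

/-- Once one element generates, the differences are non-increasing. -/
lemma diff_antitone [FiniteDimensional k O] (U : Submodule k O) (h1 : (1 : O) ∈ U)
    (t : ℕ) (ht : 1 ≤ t) (y : O) (hy : y ∈ U)
    (hgen : U ^ t ≤ U ^ (t - 1) ⊔ (U ^ (t - 1)).map (LinearMap.mulLeft k y))
    (T : ℕ) (hT : t ≤ T) :
    finrank k ↥(U ^ (T + 1)) + finrank k ↥(U ^ (T - 1)) ≤ 2 * finrank k ↥(U ^ T) := by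
  have hgen' : U ^ (T + 1) ≤ U ^ T ⊔ (U ^ T).map (LinearMap.mulLeft k y) := by
    have e1 : U ^ (T + 1) = U ^ t * U ^ (T + 1 - t) := by rw [← pow_add]; congr 1; omega
    have e2 : U ^ T = U ^ (t - 1) * U ^ (T + 1 - t) := by rw [← pow_add]; congr 1; omega
    rw [e1, Submodule.mul_le]
    intro m hm n hn
    obtain ⟨m1, hm1, m2, hm2, rfl⟩ := Submodule.mem_sup.mp (hgen hm)
    obtain ⟨m3, hm3, rfl⟩ := hm2
    rw [add_mul]
    refine Submodule.add_mem_sup ?_ ?_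
    · rw [e2]; exact Submodule.mul_mem_mul hm1 hn
    · refine ⟨m3 * n, ?_, ?_⟩
      · rw [e2]; exact Submodule.mul_mem_mul hm3 hn
      · simp [mul_assoc]
  let f : ↥(U ^ T) →ₗ[k] O ⧸ (U ^ T) :=
    ((U ^ T).mkQ.comp (LinearMap.mulLeft k y)).comp (U ^ T).subtype
  have hle : U ^ (T - 1) ≤ U ^ T := pow_mono_of_one_mem U h1 (by omega)
  have hker : (U ^ (T - 1)).comap (U ^ T).subtype ≤ LinearMap.ker f := by
    rintro ⟨x, hx⟩ hx'
    simp only [f, LinearMap.mem_ker, LinearMap.comp_apply, Submodule.mkQ_apply,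
      Submodule.Quotient.mk_eq_zero, LinearMap.mulLeft_apply, Submodule.subtype_apply]
    have : U ^ T = U * U ^ (T - 1) := by rw [← pow_succ']; congr 1; omega
    rw [this]
    exact Submodule.mul_mem_mul hy hx'
  have h3 := Submodule.finrank_mono hker
  have h4 : finrank k ↥((U ^ (T - 1)).comap (U ^ T).subtype) = finrank k ↥(U ^ (T - 1)) :=
    (Submodule.comapSubtypeEquivOfLe hle).finrank_eq
  have h2 := LinearMap.finrank_range_add_finrank_ker f
  have h5 : finrank k ↥(U ^ (T + 1)) ≤ finrank k ↥(U ^ T) + finrank k (LinearMap.range f) := by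
    let g : ↥(U ^ (T + 1)) →ₗ[k] O ⧸ (U ^ T) := (U ^ T).mkQ.comp (U ^ (T + 1)).subtype
    have hr : LinearMap.range g ≤ LinearMap.range f := by
      rintro _ ⟨⟨x, hx⟩, rfl⟩
      obtain ⟨m1, hm1, m2, ⟨m3, hm3, rfl⟩, rfl⟩ := Submodule.mem_sup.mp (hgen' hx)
      refine ⟨⟨m3, hm3⟩, ?_⟩
      simp only [f, g, LinearMap.comp_apply, Submodule.mkQ_apply, Submodule.subtype_apply,
        Submodule.Quotient.mk_add, (Submodule.Quotient.mk_eq_zero _).mpr hm1, zero_add]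
    have hk : LinearMap.ker g ≤ (U ^ T).comap (U ^ (T + 1)).subtype := by
      intro x hx
      simpa [g] using hx
    have h6 := LinearMap.finrank_range_add_finrank_ker g
    have h7 := Submodule.finrank_mono hr
    have h8 := Submodule.finrank_mono hk
    have h9 : finrank k ↥((U ^ T).comap (U ^ (T + 1)).subtype) = finrank k ↥(U ^ T) :=
      (Submodule.comapSubtypeEquivOfLe
        (pow_mono_of_one_mem U h1 (Nat.le_succ T))).finrank_eq
    omega
  omega

end Filtration

/-- Arithmetic core: constraints on the Hilbert function force its differences to be at most `3`. -/
lemma hilbert_arith (d z : ℕ) (H : ℕ → ℕ) (hd : 17 ≤ d) (h0 : H 0 = 1) (h1 : H 1 = 4)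
    (hsym : ∀ s ≤ d, H s + H (d - s) ≤ z) (htail : z ≤ H d + 1) (hz : z + 2 ≤ 4 * d)
    (hB : ∀ t, 1 ≤ t → H t ≤ H (t - 1) + t → ∀ T, t ≤ T → H (T + 1) + H (T - 1) ≤ 2 * H T)
    (hE : H 2 ≤ 7 → H d ≤ H (d - 1) + d → ∀ T, 1 ≤ T → H (T + 1) + H (T - 1) ≤ 2 * H T) :
    ∀ t, H (t + 1) ≤ H t + 3 := by
  have hs1 := hsym 1 (by omega)
  -- differences stay at most `c` once they are at most `c ≤ t`
  have hdec : ∀ t, 1 ≤ t → ∀ c, c ≤ t → H t ≤ H (t - 1) + c →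
      ∀ n, H (t + n) ≤ H (t + n - 1) + c := by
    intro t ht c hc hle n
    induction n with
    | zero => simpa using hle
    | succ n ih =>
      have := hB t ht (by omega) (t + n) (by omega)
      have e : t + (n + 1) - 1 = t + n := by omega
      rw [e]
      have e2 : t + (n + 1) = t + n + 1 := by omega
      rw [e2]
      omega
  have hgrow : ∀ (t0 c n : ℕ), (∀ i, t0 ≤ i → i < t0 + n → H i + c ≤ H (i + 1)) →
      H t0 + c * n ≤ H (t0 + n) := by
    intro t0 c n
    induction n with
    | zero => intro _; simp
    | succ n ih =>
      intro h
      have h2 := ih (fun i hi hi' => h i hi (by omega))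
      have h3 := h (t0 + n) (by omega) (by omega)
      have e : t0 + (n + 1) = t0 + n + 1 := by omega
      rw [e, Nat.mul_succ]
      omega
  have hupper : ∀ (t0 c n : ℕ), (∀ i, t0 ≤ i → i < t0 + n → H (i + 1) ≤ H i + c) →
      H (t0 + n) ≤ H t0 + c * n := by
    intro t0 c n
    induction n with
    | zero => intro _; simp
    | succ n ih =>
      intro h
      have h2 := ih (fun i hi hi' => h i hi (by omega))
      have h3 := h (t0 + n) (by omega) (by omega)
      have e : t0 + (n + 1) = t0 + n + 1 := by omega
      rw [e, Nat.mul_succ]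
      omega
  by_cases h2 : H 2 ≤ 7
  · -- first the `d`-th difference is small
    have hdd : H d ≤ H (d - 1) + d := by
      by_contra hcon
      have hall : ∀ t, 1 ≤ t → t ≤ d → H (t - 1) + t < H t := by
        intro t ht htd
        by_contra hc
        have := hdec t ht t le_rfl (by omega) (d - t)
        have e : t + (d - t) = d := by omega
        rw [e] at this
        omega
      have g1 := hgrow 5 6 (d - 5) (by
        intro i hi hi'
        have := hall (i + 1) (by omega) (by omega)
        simp only [Nat.add_sub_cancel] at this
        omega)
      have e : 5 + (d - 5) = d := by omega
      rw [e] at g1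
      have := hsym 0 (by omega)
      simp only [Nat.sub_zero] at this
      omega
    have hT := hE h2 hdd
    have hstep : ∀ t, H (t + 1) ≤ H t + 3 := by
      intro t
      induction t with
      | zero => simp only [zero_add]; omega
      | succ t ih =>
        have := hT (t + 1) (by omega)
        simp only [Nat.add_sub_cancel] at this
        omega
    exact hstep
  · exfalso
    push Not at h2
    have hex : ∃ t, 3 ≤ t ∧ H t ≤ H (t - 1) + 3 := by
      by_contra hcon
      push Not at hcon
      have g := hgrow 2 4 (d - 4) (by
        intro i hi hi'
        have := hcon (i + 1) (by omega)
        simp only [Nat.add_sub_cancel] at this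
        omega)
      have e : 2 + (d - 4) = d - 2 := by omega
      rw [e] at g
      have := hsym 2 (by omega)
      omega
    classical
    obtain ⟨t0, ⟨ht3, hle⟩, hmin⟩ : ∃ t0, (3 ≤ t0 ∧ H t0 ≤ H (t0 - 1) + 3) ∧
        ∀ m < t0, ¬ (3 ≤ m ∧ H m ≤ H (m - 1) + 3) :=
      ⟨Nat.find hex, Nat.find_spec hex, fun m hm => Nat.find_min hex hm⟩
    have hbig : ∀ i, 2 ≤ i → i + 1 < t0 → H i + 4 ≤ H (i + 1) := by
      intro i hi hi'
      have := hmin (i + 1) hi'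
      simp only [Nat.add_sub_cancel] at this
      omega
    have htd : t0 ≤ d - 2 := by
      by_contra hc
      have g := hgrow 2 4 (d - 4) (fun i hi hi' => hbig i hi (by omega))
      have e : 2 + (d - 4) = d - 2 := by omega
      rw [e] at g
      have := hsym 2 (by omega)
      omega
    have htail3 : ∀ i, t0 ≤ i + 1 → H (i + 1) ≤ H i + 3 := by
      intro i hi
      have := hdec t0 (by omega) 3 ht3 hle (i + 1 - t0)
      have e : t0 + (i + 1 - t0) = i + 1 := by omega
      rw [e] at this
      simpa using this
    have hup := hupper (t0 - 1) 3 (d + 1 - t0) (fun i hi hi' => htail3 i (by omega))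
    have e1 : t0 - 1 + (d + 1 - t0) = d := by omega
    rw [e1] at hup
    have hs := hsym (d + 1 - t0) (by omega)
    have e2 : d - (d + 1 - t0) = t0 - 1 := by omega
    rw [e2] at hs
    -- H s ≤ 3 s + 1
    by_cases hst : d + 1 - t0 ≤ t0 - 1
    · have g := hgrow 2 4 (d + 1 - t0 - 2) (fun i hi hi' => hbig i hi (by omega))
      have e : 2 + (d + 1 - t0 - 2) = d + 1 - t0 := by omega
      rw [e] at g
      omega
    · -- differences are exactly three
      have hd3 : ∀ i, t0 ≤ i + 1 → i + 1 ≤ d → H i + 3 ≤ H (i + 1) := by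
        intro i hi hid
        by_contra hc
        have := hdec (i + 1) (by omega) 2 (by omega)
          (by simp only [Nat.add_sub_cancel]; omega) (d - (i + 1))
        have e : i + 1 + (d - (i + 1)) = d := by omega
        rw [e] at this
        omega
      have g1 := hgrow 2 4 (t0 - 3) (fun i hi hi' => hbig i hi (by omega))
      have e3 : 2 + (t0 - 3) = t0 - 1 := by omega
      rw [e3] at g1
      have g2 := hgrow (t0 - 1) 3 (d + 1 - t0 - (t0 - 1))
        (fun i hi hi' => hd3 i (by omega) (by omega))
      have e4 : t0 - 1 + (d + 1 - t0 - (t0 - 1)) = d + 1 - t0 := by omega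
      rw [e4] at g2
      omega

section Frobenius

open Module

variable {k O : Type*} [Field k] [CommRing O] [Algebra k O]

/-- Orthogonal subspaces under a nondegenerate functional. -/
lemma finrank_add_le_of_orthogonal [FiniteDimensional k O] (φ : Dual k O)
    (hnd : ∀ a, (∀ b, φ (a * b) = 0) → a = 0) (A B : Submodule k O)
    (h : ∀ a ∈ A, ∀ b ∈ B, φ (a * b) = 0) : finrank k A + finrank k B ≤ finrank k O := by
  let f : A →ₗ[k] Dual k O :=
    (LinearMap.compr₂ (LinearMap.mul k O) φ).comp A.subtype
  have hinj : Function.Injective f := by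
    rw [← LinearMap.ker_eq_bot, LinearMap.ker_eq_bot']
    rintro ⟨a, ha⟩ hf
    ext
    refine hnd a fun b => ?_
    exact LinearMap.congr_fun hf b
  have hr : LinearMap.range f ≤ B.dualAnnihilator := by
    rintro _ ⟨⟨a, ha⟩, rfl⟩
    rw [Submodule.mem_dualAnnihilator]
    intro b hb
    exact h a ha b hb
  have h1 := LinearMap.finrank_range_of_inj hinj
  have h2 := Submodule.finrank_mono hr
  have h3 := Subspace.finrank_add_finrank_dualAnnihilator_eq B
  omega

/-- If the orthogonal of `W` is contained in the scalars, then `W` has codimension at most one. -/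
lemma finrank_le_of_orthogonal [FiniteDimensional k O] (φ : Dual k O)
    (hnd : ∀ a, (∀ b, φ (a * b) = 0) → a = 0) (W : Submodule k O)
    (hW : ∀ g : O, (∀ a ∈ W, φ (g * a) = 0) → g ∈ Submodule.span k {(1 : O)}) :
    finrank k O ≤ finrank k W + 1 := by
  let f : O →ₗ[k] Dual k O := LinearMap.compr₂ (LinearMap.mul k O) φ
  have hinj : Function.Injective f := by
    rw [← LinearMap.ker_eq_bot, LinearMap.ker_eq_bot']
    intro a hf
    refine hnd a fun b => ?_
    exact LinearMap.congr_fun hf b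
  have h3 := Subspace.finrank_add_finrank_dualAnnihilator_eq W
  have hle : W.dualAnnihilator.comap f ≤ Submodule.span k {(1 : O)} := by
    intro g hg
    refine hW g fun a ha => ?_
    exact (Submodule.mem_dualAnnihilator _).mp hg a ha
  have hsurj : Function.Surjective f := by
    refine (LinearMap.injective_iff_surjective_of_finrank_eq_finrank ?_).mp hinj
    exact (Subspace.dual_finrank_eq).symm
  have h4 : finrank k (W.dualAnnihilator.comap f) = finrank k W.dualAnnihilator := by
    let e := LinearEquiv.ofBijective f ⟨hinj, hsurj⟩
    have := LinearEquiv.finrank_map_eq e (W.dualAnnihilator.comap f)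
    rw [← this]
    have h7 : Submodule.map (e : O →ₗ[k] Dual k O) (W.dualAnnihilator.comap f)
        = W.dualAnnihilator := Submodule.map_comap_eq_of_surjective hsurj _
    rw [h7]
  have h5 := Submodule.finrank_mono hle
  have h6 : finrank k (Submodule.span k {(1 : O)}) ≤ 1 := by
    have h6' := finrank_span_finset_le_card (R := k) ({(1 : O)} : Finset O)
    rw [Finset.card_singleton, Finset.coe_singleton] at h6'
    exact h6'
  omega

/-- Main numerical theorem. -/
theorem hilbert_bound [Infinite k] [FiniteDimensional k O] (U : Submodule k O) (h1 : (1 : O) ∈ U)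
    (hU : finrank k U = 4) (φ : Dual k O)
    (hnd : ∀ a, (∀ b, φ (a * b) = 0) → a = 0) (d : ℕ) (hd : 17 ≤ d)
    (hφ : ∀ a ∈ U ^ d, φ a = 0)
    (hW : ∀ g : O, (∀ a ∈ U ^ d, φ (g * a) = 0) → g ∈ Submodule.span k {(1 : O)})
    (hz : finrank k O + 2 ≤ 4 * d) (t : ℕ) :
    finrank k ↥(U ^ (t + 1)) ≤ finrank k ↥(U ^ t) + 3 := by
  have hone : (1 : O) ≠ 0 := by
    intro h
    have : ∀ a : O, a = 0 := fun a => by rw [← mul_one a, h, mul_zero]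
    have hs : Subsingleton U := ⟨fun a b => Subtype.ext (by rw [this a.1, this b.1])⟩
    rw [finrank_zero_of_subsingleton] at hU
    omega
  have hspan1 : finrank k (Submodule.span k {(1 : O)}) = 1 := finrank_span_singleton hone
  have hH0 : finrank k ↥(U ^ 0) = 1 := by
    rw [pow_zero, Submodule.one_eq_span]
    exact hspan1
  have hH1 : finrank k ↥(U ^ 1) = 4 := by rw [pow_one]; exact hU
  refine hilbert_arith d (finrank k O) (fun t => finrank k ↥(U ^ t)) hd hH0 hH1 ?_ ?_ hz ?_ ?_ t
  · intro s hs
    refine finrank_add_le_of_orthogonal φ hnd _ _ ?_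
    intro a ha b hb
    apply hφ
    have := Submodule.mul_mem_mul ha hb
    rw [← pow_add] at this
    have e : s + (d - s) = d := by omega
    rwa [e] at this
  · exact finrank_le_of_orthogonal φ hnd _ hW
  · intro t ht hle T hT
    obtain ⟨y, hy, hgen⟩ := exists_generator U h1 t ht hle
    exact diff_antitone U h1 t ht y hy hgen T hT
  · intro h2 hdd T hT
    obtain ⟨y, hy, hgen⟩ := exists_generator U h1 d (by omega) hdd
    let f : U →ₗ[k] O ⧸ U := (U.mkQ.comp (LinearMap.mulLeft k y)).comp U.subtype
    have hker : LinearMap.ker f ≤ (Submodule.span k {(1 : O)}).comap U.subtype := by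
      rintro ⟨u, hu⟩ hf
      simp only [f, LinearMap.mem_ker, LinearMap.comp_apply, Submodule.mkQ_apply,
        Submodule.Quotient.mk_eq_zero, LinearMap.mulLeft_apply, Submodule.subtype_apply] at hf
      refine hW u fun a ha => ?_
      obtain ⟨m1, hm1, m2, ⟨m3, hm3, rfl⟩, rfl⟩ := Submodule.mem_sup.mp (hgen ha)
      have hdU : U ^ d = U * U ^ (d - 1) := by rw [← pow_succ']; congr 1; omega
      have e1 : φ (u * m1) = 0 := hφ _ (by rw [hdU]; exact Submodule.mul_mem_mul hu hm1)
      have e2 : φ ((y * u) * m3) = 0 := hφ _ (by rw [hdU]; exact Submodule.mul_mem_mul hf hm3)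
      rw [mul_add, map_add, e1, zero_add, LinearMap.mulLeft_apply, ← e2]
      congr 1; ring
    have hspanle : Submodule.span k {(1 : O)} ≤ U := by
      rw [Submodule.span_le]; simpa using h1
    have k1 := Submodule.finrank_mono hker
    rw [(Submodule.comapSubtypeEquivOfLe hspanle).finrank_eq, hspan1] at k1
    have k2 := LinearMap.finrank_range_add_finrank_ker f
    have hsq : U ⊔ U.map (LinearMap.mulLeft k y) ≤ U ^ 2 := by
      refine sup_le ?_ ?_
      · have := pow_mono_of_one_mem U h1 (a := 1) (b := 2) (by omega)
        rwa [pow_one] at this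
      · rintro _ ⟨u, hu, rfl⟩
        rw [sq]
        exact Submodule.mul_mem_mul hy hu
    have k3 : finrank k U + finrank k (LinearMap.range f)
        ≤ finrank k ↥(U ⊔ U.map (LinearMap.mulLeft k y)) := by
      set V := U ⊔ U.map (LinearMap.mulLeft k y) with hV
      let g : V →ₗ[k] O ⧸ U := U.mkQ.comp V.subtype
      have g1 := LinearMap.finrank_range_add_finrank_ker g
      have g2 : LinearMap.range f ≤ LinearMap.range g := by
        rintro _ ⟨⟨u, hu⟩, rfl⟩
        exact ⟨⟨y * u, Submodule.mem_sup_right ⟨u, hu, rfl⟩⟩, rfl⟩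
      have g3 : U.comap V.subtype ≤ LinearMap.ker g := by
        intro x hx
        simpa [g] using hx
      have g4 := Submodule.finrank_mono g2
      have g5 := Submodule.finrank_mono g3
      rw [(Submodule.comapSubtypeEquivOfLe (le_sup_left : U ≤ V)).finrank_eq] at g5
      omega
    have heq : U ⊔ U.map (LinearMap.mulLeft k y) = U ^ 2 := by
      refine Submodule.eq_of_le_of_finrank_le hsq ?_
      omega
    by_cases hT1 : T = 1
    · subst hT1
      change finrank k ↥(U ^ 2) + finrank k ↥(U ^ 0) ≤ 2 * finrank k ↥(U ^ 1)
      rw [hH0, hH1]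
      omega
    · refine diff_antitone U h1 2 (by omega) y hy ?_ T (by omega)
      simp only [Nat.add_one_sub_one, pow_one]
      exact heq.ge

end Frobenius

section Jets

open Module MvPolynomial

variable {k : Type*} [Field k]

/-- Directional derivative of `f` at the point `P` along `w`. -/
noncomputable def dirDer (P w : Fin 4 → k) (f : MvPolynomial (Fin 4) k) : k :=
  ∑ i, w i * eval P (pderiv i f)

lemma dirDer_add (P w : Fin 4 → k) (f g : MvPolynomial (Fin 4) k) :
    dirDer P w (f + g) = dirDer P w f + dirDer P w g := by
  simp [dirDer, mul_add, Finset.sum_add_distrib]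

lemma dirDer_sub (P w : Fin 4 → k) (f g : MvPolynomial (Fin 4) k) :
    dirDer P w (f - g) = dirDer P w f - dirDer P w g := by
  simp [dirDer, mul_sub, Finset.sum_sub_distrib]

lemma dirDer_mul (P w : Fin 4 → k) (f g : MvPolynomial (Fin 4) k) :
    dirDer P w (f * g) = eval P f * dirDer P w g + dirDer P w f * eval P g := by
  simp only [dirDer, Derivation.leibniz, smul_eq_mul, map_add, map_mul, Finset.mul_sum,
    Finset.sum_mul, ← Finset.sum_add_distrib]
  refine Finset.sum_congr rfl fun i _ => ?_
  ring

lemma dirDer_C (P w : Fin 4 → k) (a : k) : dirDer P w (C a) = 0 := by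
  simp [dirDer]

lemma dirDer_X (P w : Fin 4 → k) (i : Fin 4) : dirDer P w (X i) = w i := by
  classical
  simp [dirDer, pderiv_X, Pi.single_apply, apply_ite (eval P)]

lemma dirDer_zero (P : Fin 4 → k) (f : MvPolynomial (Fin 4) k) : dirDer P 0 f = 0 := by
  simp [dirDer]

lemma dirDer_smul (P w : Fin 4 → k) (a : k) (f : MvPolynomial (Fin 4) k) :
    dirDer P (a • w) f = a * dirDer P w f := by
  simp [dirDer, Finset.mul_sum, mul_assoc]

variable {ι : Type*}

/-- The first-order jet map at the points `P p` in directions `w p`. -/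
noncomputable def jet (P w : ι → Fin 4 → k) :
    MvPolynomial (Fin 4) k →ₐ[k] (ι → DualNumber k) :=
  AlgHom.pi fun p =>
    aeval fun i => (TrivSqZeroExt.inl (P p i) + TrivSqZeroExt.inr (w p i) : DualNumber k)

lemma jet_both (P w : ι → Fin 4 → k) (f : MvPolynomial (Fin 4) k) (p : ι) :
    (jet P w f p).fst = eval (P p) f ∧ (jet P w f p).snd = dirDer (P p) (w p) f := by
  induction f using MvPolynomial.induction_on with
  | C a =>
    simp [jet, dirDer_C, TrivSqZeroExt.algebraMap_eq_inl]
  | add f g hf hg =>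
    rw [map_add, map_add, dirDer_add, Pi.add_apply, TrivSqZeroExt.fst_add,
      TrivSqZeroExt.snd_add, hf.1, hf.2, hg.1, hg.2]
    exact ⟨rfl, rfl⟩
  | mul_X f i hf =>
    have hX1 : (jet P w (X i) p).fst = P p i := by simp [jet]
    have hX2 : (jet P w (X i) p).snd = w p i := by simp [jet]
    rw [map_mul, map_mul, dirDer_mul, Pi.mul_apply, TrivSqZeroExt.fst_mul,
      TrivSqZeroExt.snd_mul, hf.1, hf.2, hX1, hX2, dirDer_X, eval_X]
    refine ⟨rfl, ?_⟩
    simp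

lemma jet_fst (P w : ι → Fin 4 → k) (f : MvPolynomial (Fin 4) k) (p : ι) :
    (jet P w f p).fst = eval (P p) f := (jet_both P w f p).1

lemma jet_snd (P w : ι → Fin 4 → k) (f : MvPolynomial (Fin 4) k) (p : ι) :
    (jet P w f p).snd = dirDer (P p) (w p) f := (jet_both P w f p).2

lemma dual_mul_eq_zero {a b : DualNumber k} (h : a * b = 0) (hb : b.fst ≠ 0) : a = 0 := by
  have h1 : a.fst * b.fst = 0 := by rw [← TrivSqZeroExt.fst_mul, h]; rfl
  have h0 : a.fst = 0 := (mul_eq_zero.mp h1).resolve_right hb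
  have h2 : a.fst • b.snd + b.fst • a.snd = 0 := by
    have := congrArg TrivSqZeroExt.snd h
    simpa [TrivSqZeroExt.snd_mul, mul_comm] using this
  have h3 : a.snd = 0 := by
    rw [h0, zero_smul, zero_add, smul_eq_mul] at h2
    exact (mul_eq_zero.mp h2).resolve_left hb
  exact TrivSqZeroExt.ext h0 h3

/-- A polynomial concentrated at one of the points. -/
lemma exists_concentrated [Fintype ι] (P : ι → Fin 4 → k) (hP : Function.Injective P) (p : ι) :
    ∃ e : MvPolynomial (Fin 4) k, eval (P p) e ≠ 0 ∧
      ∀ w : ι → Fin 4 → k, ∀ q, q ≠ p → jet P w e q = 0 := by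
  classical
  have hsep : ∀ q, q ≠ p → ∃ i, P p i ≠ P q i := by
    intro q hq
    by_contra hcon
    push Not at hcon
    exact hq (hP (funext fun i => (hcon i).symm))
  choose! s hs using hsep
  refine ⟨∏ q ∈ Finset.univ.erase p, (X (s q) - C (P q (s q))) ^ 2, ?_, ?_⟩
  · rw [map_prod, Finset.prod_ne_zero_iff]
    intro q hq
    have := hs q (Finset.ne_of_mem_erase hq)
    simp only [map_pow, map_sub, eval_X, eval_C]
    exact pow_ne_zero _ (sub_ne_zero.mpr this)
  · intro w q hq
    rw [map_prod, Finset.prod_apply]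
    refine Finset.prod_eq_zero (i := q) (Finset.mem_erase.mpr ⟨hq, Finset.mem_univ _⟩) ?_
    rw [sq, map_mul, Pi.mul_apply]
    refine TrivSqZeroExt.ext ?_ ?_
    · rw [TrivSqZeroExt.fst_mul, jet_fst]; simp
    · rw [TrivSqZeroExt.snd_mul, jet_fst]; simp

/-- The functional attached to the coefficients `c`. -/
noncomputable def relFun [Fintype ι] (c : ι → k) : Dual k (ι → DualNumber k) where
  toFun b := ∑ p, ((b p).snd + c p * (b p).fst)
  map_add' := by
    intro a b
    rw [← Finset.sum_add_distrib]
    refine Finset.sum_congr rfl fun p _ => ?_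
    simp only [Pi.add_apply, TrivSqZeroExt.fst_add, TrivSqZeroExt.snd_add]
    ring
  map_smul' := by
    intro r a
    rw [RingHom.id_apply, smul_eq_mul, Finset.mul_sum]
    refine Finset.sum_congr rfl fun p _ => ?_
    simp only [Pi.smul_apply, TrivSqZeroExt.fst_smul, TrivSqZeroExt.snd_smul, smul_eq_mul]
    ring

lemma relFun_apply [Fintype ι] (c : ι → k) (b : ι → DualNumber k) :
    relFun c b = ∑ p, ((b p).snd + c p * (b p).fst) := rfl

/-- Linear relations among first-order evaluations on degree `d` forms. -/
def IsRel [Fintype ι] (P : ι → Fin 4 → k) (d : ℕ) (w : ι → Fin 4 → k) (c : ι → k) : Prop :=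
  ∀ f ∈ homogeneousSubmodule (Fin 4) k d, relFun c (jet P w f) = 0

lemma relFun_nondeg [Fintype ι] (P : ι → Fin 4 → k) (hP : Function.Injective P)
    (w : ι → Fin 4 → k) (c : ι → k) (hne : ∀ p, w p = 0 → c p ≠ 0)
    (g : MvPolynomial (Fin 4) k) (hg : ∀ f, relFun c (jet P w (g * f)) = 0) :
    jet P w g = 0 := by
  funext p
  obtain ⟨e, he, he'⟩ := exists_concentrated P hP p
  have hloc : ∀ h, dirDer (P p) (w p) (g * e * h) + c p * eval (P p) (g * e * h) = 0 := by
    intro h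
    have := hg (e * h)
    rw [relFun_apply, Finset.sum_eq_single p] at this
    · rwa [jet_fst, jet_snd, ← mul_assoc] at this
    · intro q _ hq
      have h0 : jet P w (g * (e * h)) q = 0 := by
        rw [map_mul, map_mul, Pi.mul_apply, Pi.mul_apply, he' w q hq, zero_mul, mul_zero]
      rw [h0]; simp
    · intro h; exact absurd (Finset.mem_univ p) h
  have hge : jet P w (g * e) p = 0 := by
    have h1 := hloc 1
    rw [mul_one] at h1
    by_cases hw : w p = 0
    · rw [hw, dirDer_zero, zero_add] at h1
      have h0 := (mul_eq_zero.mp h1).resolve_left (hne p hw)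
      refine TrivSqZeroExt.ext ?_ ?_
      · rw [jet_fst]; exact h0
      · rw [jet_snd, hw, dirDer_zero]; rfl
    · obtain ⟨i, hi⟩ := Function.ne_iff.mp hw
      have h2 := hloc (X i - C (P p i))
      rw [dirDer_mul, dirDer_sub, dirDer_X, dirDer_C] at h2
      simp only [map_mul, map_sub, eval_X, eval_C, sub_self, mul_zero, add_zero, sub_zero] at h2
      rw [← map_mul] at h2
      have h0 := (mul_eq_zero.mp h2).resolve_right hi
      rw [h0, mul_zero, add_zero] at h1
      refine TrivSqZeroExt.ext ?_ ?_
      · rw [jet_fst]; exact h0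
      · rw [jet_snd]; exact h1
  rw [map_mul, Pi.mul_apply] at hge
  exact dual_mul_eq_zero hge (by rw [jet_fst]; exact he)

/-- Linear form with coefficients `a`. -/
noncomputable def linForm (a : Fin 4 → k) : MvPolynomial (Fin 4) k := ∑ i, a i • X i

lemma linForm_mem (a : Fin 4 → k) : linForm a ∈ homogeneousSubmodule (Fin 4) k 1 :=
  Submodule.sum_mem _ fun i _ => Submodule.smul_mem _ _ (isHomogeneous_X k i)

lemma eval_linForm (a v : Fin 4 → k) : eval v (linForm a) = ∑ i, a i * v i := by
  simp [linForm, smul_eval]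

lemma dirDer_linForm (P w a : Fin 4 → k) : dirDer P w (linForm a) = ∑ i, a i * w i := by
  classical
  simp only [linForm, dirDer, map_sum]
  refine Finset.sum_congr rfl fun i _ => ?_
  rw [Finset.sum_eq_single i]
  · simp [mul_comm]
  · intro j _ hj; simp [hj]
  · simp

lemma exists_linForm {f : MvPolynomial (Fin 4) k} (hf : f ∈ homogeneousSubmodule (Fin 4) k 1) :
    ∃ a, f = linForm a := by
  rw [homogeneousSubmodule_one_eq_span_X, Submodule.mem_span_range_iff_exists_fun] at hf
  obtain ⟨a, ha⟩ := hf
  exact ⟨a, ha.symm⟩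

lemma map_homog_pow {A : Type*} [CommRing A] [Algebra k A]
    (F : MvPolynomial (Fin 4) k →ₐ[k] A) (t : ℕ) :
    ((homogeneousSubmodule (Fin 4) k 1).map F.toLinearMap) ^ t
      = (homogeneousSubmodule (Fin 4) k t).map F.toLinearMap := by
  rw [← Submodule.map_pow, homogeneousSubmodule_one_pow]

instance finiteDimensional_dualNumber : FiniteDimensional k (DualNumber k) :=
  inferInstanceAs (FiniteDimensional k (k × k))

lemma finrank_jetRing [Fintype ι] : finrank k (ι → DualNumber k) = 2 * Fintype.card ι := by
  have h : finrank k (DualNumber k) = 2 := by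
    change finrank k (k × k) = 2
    rw [finrank_prod, finrank_self]
  rw [Module.finrank_pi_fintype]
  simp [h, mul_comm]

lemma jet_one_mem (P w : ι → Fin 4 → k) (L : Fin 4 → k)
    (hP : ∀ p, ∑ i, L i * P p i = 1) (hw : ∀ p, ∑ i, L i * w p i = 0) :
    jet P w (linForm L) = 1 := by
  funext p
  refine TrivSqZeroExt.ext ?_ ?_
  · rw [jet_fst, eval_linForm, hP]; rfl
  · rw [jet_snd, dirDer_linForm, hw]; rfl

end Jets

section StageOne

open Module MvPolynomial

variable {k : Type*} [Field k] {ι : Type*}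

/-- Twisting a relation by a polynomial. -/
lemma relFun_twist [Fintype ι] (P w : ι → Fin 4 → k) (c : ι → k)
    (g f : MvPolynomial (Fin 4) k) :
    relFun (fun q => c q * eval (P q) g + dirDer (P q) (w q) g)
      (jet P (fun q => eval (P q) g • w q) f) = relFun c (jet P w (g * f)) := by
  rw [relFun_apply, relFun_apply]
  refine Finset.sum_congr rfl fun q _ => ?_
  rw [jet_fst, jet_fst, jet_snd, jet_snd, dirDer_smul, dirDer_mul, map_mul]
  ring

theorem stage_one [Infinite k] [Fintype ι] [Nonempty ι] (P : ι → Fin 4 → k) (L : Fin 4 → k)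
    (hLP : ∀ p, ∑ i, L i * P p i = 1) (hPinj : Function.Injective P)
    (hspan : ∀ a : Fin 4 → k, (∀ p, ∑ i, a i * P p i = 0) → a = 0)
    (d : ℕ) (hd : 17 ≤ d) (hcard : 2 * Fintype.card ι + 2 ≤ 4 * d)
    (hmin : ∀ w c, (∀ p, ∑ i, L i * w p i = 0) → IsRel P d w c →
      ∀ p, w p = 0 → c p = 0 → w = 0 ∧ c = 0)
    (w : ι → Fin 4 → k) (c : ι → k) (hLw : ∀ p, ∑ i, L i * w p i = 0)
    (hrel : IsRel P d w c) (hne : ∀ p, w p = 0 → c p ≠ 0)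
    (hch : (∃ p, w p = 0) ∨ ∀ w' c', (∀ p, ∑ i, L i * w' p i = 0) → IsRel P d w' c' →
      ∀ p, w' p = 0 → w' = 0 ∧ c' = 0) (t : ℕ) :
    finrank k ((homogeneousSubmodule (Fin 4) k (t + 1)).map (jet P w).toLinearMap)
      ≤ finrank k ((homogeneousSubmodule (Fin 4) k t).map (jet P w).toLinearMap) + 3 := by
  let O := (jet P w).range
  let F : MvPolynomial (Fin 4) k →ₐ[k] O := (jet P w).rangeRestrict
  let U : Submodule k O := (homogeneousSubmodule (Fin 4) k 1).map F.toLinearMap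
  have hUt : ∀ t, U ^ t = (homogeneousSubmodule (Fin 4) k t).map F.toLinearMap :=
    fun t => map_homog_pow F t
  have hF : ∀ f, ((F f : O) : ι → DualNumber k) = jet P w f := fun f => rfl
  have hsurj : ∀ a : O, ∃ f, F f = a := (jet P w).rangeRestrict_surjective
  have hfin : ∀ t, finrank k ↥(U ^ t)
      = finrank k ((homogeneousSubmodule (Fin 4) k t).map (jet P w).toLinearMap) := by
    intro t
    rw [hUt]
    have hmm : (homogeneousSubmodule (Fin 4) k t).map (jet P w).toLinearMap
        = ((homogeneousSubmodule (Fin 4) k t).map F.toLinearMap).map O.val.toLinearMap := by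
      rw [← Submodule.map_comp]
      rfl
    rw [hmm]
    exact (LinearEquiv.finrank_eq (Submodule.equivMapOfInjective O.val.toLinearMap Subtype.val_injective _))
  rw [← hfin, ← hfin]
  let φ : Dual k O := (relFun c).comp O.val.toLinearMap
  have hφF : ∀ f, φ (F f) = relFun c (jet P w f) := fun f => rfl
  have h1U : (1 : O) ∈ U := by
    refine ⟨linForm L, linForm_mem L, ?_⟩
    apply Subtype.ext
    exact jet_one_mem P w L hLP hLw
  have hφd : ∀ a ∈ U ^ d, φ a = 0 := by
    intro a ha
    rw [hUt] at ha
    obtain ⟨f, hf, rfl⟩ := ha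
    exact hrel f hf
  refine hilbert_bound U h1U ?_ φ ?_ d hd hφd ?_ ?_ t
  · let G : (Fin 4 → k) →ₗ[k] O := F.toLinearMap.comp (Fintype.linearCombination k (fun i : Fin 4 => (X i : MvPolynomial (Fin 4) k)))
    have hG : ∀ a, G a = F (linForm a) := fun a => rfl
    have hGinj : Function.Injective G := by
      rw [← LinearMap.ker_eq_bot, LinearMap.ker_eq_bot']
      intro a ha
      refine hspan a fun p => ?_
      rw [← eval_linForm, ← jet_fst P w, ← hF, ← hG, ha]
      rfl
    have hr : LinearMap.range G = U := by
      ext x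
      constructor
      · rintro ⟨a, rfl⟩
        exact ⟨linForm a, linForm_mem a, rfl⟩
      · rintro ⟨f, hf, rfl⟩
        obtain ⟨a, rfl⟩ := exists_linForm hf
        exact ⟨a, rfl⟩
    rw [← hr, LinearMap.finrank_range_of_inj hGinj]
    simp
  · intro a ha
    obtain ⟨g, rfl⟩ := hsurj a
    apply Subtype.ext
    refine relFun_nondeg P hPinj w c hne g fun f => ?_
    rw [← hφF, map_mul]
    exact ha (F f)
  · intro g hg
    obtain ⟨γ, rfl⟩ := hsurj g
    have key : ∀ p, (∀ w' c', (∀ p, ∑ i, L i * w' p i = 0) → IsRel P d w' c' → w' p = 0 →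
        (w p = 0 → c' p = 0) → w' = 0 ∧ c' = 0) → F γ ∈ Submodule.span k {(1 : O)} := by
      intro p hp
      let g' := γ - C (eval (P p) γ)
      have hg'p : eval (P p) g' = 0 := by simp [g']
      obtain ⟨hw0, hc0⟩ := hp (fun q => eval (P q) g' • w q)
        (fun q => c q * eval (P q) g' + dirDer (P q) (w q) g') (by
          intro q
          have : ∀ i, L i * (eval (P q) g' • w q) i = eval (P q) g' * (L i * w q i) := by
            intro i; simp only [Pi.smul_apply, smul_eq_mul]; ring
          simp only [this]
          rw [← Finset.mul_sum, hLw, mul_zero]) (by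
          intro f hf
          rw [relFun_twist, sub_mul, map_sub, map_sub, C_mul', map_smul, map_smul, hrel f hf,
            smul_zero, sub_zero, ← hφF, map_mul]
          refine hg _ ?_
          rw [hUt]
          exact ⟨f, hf, rfl⟩) (by
          change eval (P p) g' • w p = 0
          rw [hg'p, zero_smul]) (by
          intro h
          change c p * eval (P p) g' + dirDer (P p) (w p) g' = 0
          rw [hg'p, h, dirDer_zero, mul_zero, add_zero])
      have hz : jet P w g' = 0 := by
        refine relFun_nondeg P hPinj w c hne g' fun f => ?_
        rw [← relFun_twist, hw0, hc0, relFun_apply]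
        refine Finset.sum_eq_zero fun q _ => ?_
        rw [jet_snd, Pi.zero_apply, dirDer_zero, Pi.zero_apply, zero_mul, add_zero]
      have hz' : F γ = algebraMap k O (eval (P p) γ) := by
        have h2 : F g' = 0 := Subtype.ext hz
        rw [map_sub, sub_eq_zero] at h2
        rw [h2, ← algebraMap_eq, AlgHom.commutes]
      rw [hz', Algebra.algebraMap_eq_smul_one]
      exact Submodule.smul_mem _ _ (Submodule.mem_span_singleton_self _)
    rcases hch with ⟨p, hp⟩ | hch
    · exact key p fun w' c' hL' hr' hw' hc' => hmin w' c' hL' hr' p hw' (hc' hp)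
    · obtain ⟨p⟩ := ‹Nonempty ι›
      exact key p fun w' c' hL' hr' hw' _ => hch w' c' hL' hr' p hw'
  · have h1 : finrank k O ≤ finrank k (ι → DualNumber k) :=
      Submodule.finrank_le (Subalgebra.toSubmodule O)
    rw [finrank_jetRing] at h1
    omega

end StageOne

section Tangent

open Module MvPolynomial

variable {k : Type*} [Field k]

lemma exists_coeff_of_mem_span_mul {A : Type*} [CommRing A] [Algebra k A] {n : ℕ} (x : Fin n → A)
    (N : Submodule k A) (z : A) (hz : z ∈ Submodule.span k (Set.range x) * N) :
    ∃ m : Fin n → A, (∀ j, m j ∈ N) ∧ z = ∑ j, m j * x j := by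
  refine Submodule.mul_induction_on hz ?_ ?_
  · intro a ha b hb
    obtain ⟨r, rfl⟩ := (Submodule.mem_span_range_iff_exists_fun k).mp ha
    refine ⟨fun j => r j • b, fun j => N.smul_mem _ hb, ?_⟩
    rw [Finset.sum_mul]
    refine Finset.sum_congr rfl fun j _ => ?_
    rw [smul_mul_assoc, smul_mul_assoc, mul_comm]
  · rintro _ _ ⟨m, hm, rfl⟩ ⟨m', hm', rfl⟩
    refine ⟨fun j => m j + m' j, fun j => N.add_mem (hm j) (hm' j), ?_⟩
    simp [add_mul, Finset.sum_add_distrib]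

/-- Degree-controlled determinant trick. -/
lemma det_trick {A : Type*} [CommRing A] [Algebra k A] (U : Submodule k A) (h1 : (1 : A) ∈ U)
    (x : Fin 4 → A) (hx : ∀ i, x i ∈ U)
    (hle : ∀ i, x i ∈ Submodule.span k (Set.range x) * (Submodule.span k (Set.range x) * U ^ 3))
    (ev : A →ₐ[k] k) (hev : ∀ i, ev (x i) = 0) :
    ∃ g ∈ U ^ 16, ev g = 1 ∧ ∀ i, g * x i = 0 := by
  choose m hm hmx using fun i => exists_coeff_of_mem_span_mul x _ _ (hle i)
  let M : Matrix (Fin 4) (Fin 4) A := 1 - Matrix.of m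
  have hspanU : Submodule.span k (Set.range x) ≤ U := by
    rw [Submodule.span_le]
    rintro _ ⟨i, rfl⟩
    exact hx i
  have hspanev : Submodule.span k (Set.range x) ≤ LinearMap.ker ev.toLinearMap := by
    rw [Submodule.span_le]
    rintro _ ⟨i, rfl⟩
    exact hev i
  have hM4 : ∀ i j, M i j ∈ U ^ 4 := by
    intro i j
    have h41 : (1 : A) ∈ U ^ 4 := by
      have := Submodule.pow_mem_pow U h1 4
      simpa using this
    refine Submodule.sub_mem _ ?_ ?_
    · by_cases h : i = j
      · subst h; rw [Matrix.one_apply_eq]; exact h41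
      · rw [Matrix.one_apply_ne h]; exact Submodule.zero_mem _
    · have h2 : Submodule.span k (Set.range x) * U ^ 3 ≤ U ^ 4 := by
        rw [pow_succ' U 3]
        exact mul_le_mul' hspanU le_rfl
      exact h2 (hm i j)
  refine ⟨M.det, ?_, ?_, ?_⟩
  · rw [Matrix.det_apply]
    refine Submodule.sum_mem _ fun σ _ => ?_
    rw [Units.smul_def]
    refine zsmul_mem ?_ _
    rw [show (16 : ℕ) = 4 + 4 + 4 + 4 by norm_num, pow_add, pow_add, pow_add, Fin.prod_univ_four]
    exact Submodule.mul_mem_mul (Submodule.mul_mem_mul (Submodule.mul_mem_mul (hM4 _ _) (hM4 _ _))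
      (hM4 _ _)) (hM4 _ _)
  · rw [AlgHom.map_det]
    have : ev.mapMatrix M = 1 := by
      have h0 : ∀ i j, ev (m i j) = 0 := by
        intro i j
        refine Submodule.mul_induction_on (hm i j) ?_ ?_
        · intro a ha b hb
          have : ev a = 0 := hspanev ha
          rw [map_mul, this, zero_mul]
        · intro a b ha hb
          rw [map_add, ha, hb, add_zero]
      ext i j
      have hMij : M i j = (1 : Matrix (Fin 4) (Fin 4) A) i j - m i j := rfl
      rw [AlgHom.mapMatrix_apply, Matrix.map_apply, hMij, map_sub, h0, sub_zero]
      by_cases h : i = j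
      · subst h; simp
      · simp [Matrix.one_apply_ne h]
    rw [this, Matrix.det_one]
  · have hMx : M.mulVec x = 0 := by
      ext i
      rw [Matrix.sub_mulVec, Matrix.one_mulVec, Pi.sub_apply, Pi.zero_apply, sub_eq_zero]
      exact hmx i
    have h2 : (M.det • (1 : Matrix (Fin 4) (Fin 4) A)).mulVec x = 0 := by
      rw [← Matrix.adjugate_mul, ← Matrix.mulVec_mulVec, hMx, Matrix.mulVec_zero]
    intro i
    have h3 := congrFun h2 i
    rw [Matrix.smul_mulVec, Matrix.one_mulVec] at h3
    exact h3

lemma taylor_lin {A : Type*} [CommRing A] [Algebra k A] (F : MvPolynomial (Fin 4) k →ₐ[k] A)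
    (Q : Fin 4 → k) (x : Fin 4 → A) (hxF : ∀ i, F (X i) = algebraMap k A (Q i) + x i)
    (h : MvPolynomial (Fin 4) k) (hh : h ∈ homogeneousSubmodule (Fin 4) k 1) :
    F h = algebraMap k A (eval Q h) + ∑ i, eval Q (pderiv i h) • x i := by
  classical
  obtain ⟨a, rfl⟩ := exists_linForm hh
  have hp : ∀ i, eval Q (pderiv i (linForm a)) = a i := by
    intro i
    have := dirDer_linForm Q (Pi.single i 1) a
    simpa [dirDer, Pi.single_apply] using this
  simp only [hp]
  rw [eval_linForm, linForm, map_sum, map_sum, ← Finset.sum_add_distrib]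
  refine Finset.sum_congr rfl fun i _ => ?_
  rw [map_smul, hxF, smul_add, map_mul, Algebra.smul_def]

/-- Taylor expansion modulo squares. -/
lemma taylor_mod {A : Type*} [CommRing A] [Algebra k A] (F : MvPolynomial (Fin 4) k →ₐ[k] A)
    (Q : Fin 4 → k) (U I : Submodule k A)
    (hU : U = (homogeneousSubmodule (Fin 4) k 1).map F.toLinearMap)
    (h1U : (1 : A) ∈ U)
    (x : Fin 4 → A) (hxF : ∀ i, F (X i) = algebraMap k A (Q i) + x i)
    (hI : I = Submodule.span k (Set.range x)) (t : ℕ) :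
    ∀ f ∈ homogeneousSubmodule (Fin 4) k (t + 1),
      F f - algebraMap k A (eval Q f) - ∑ i, eval Q (pderiv i f) • x i ∈ I * (I * U ^ t) := by
  induction t with
  | zero =>
    intro f hf
    have hz : F f - algebraMap k A (eval Q f) - ∑ i, eval Q (pderiv i f) • x i = 0 := by
      rw [taylor_lin F Q x hxF f hf]
      ring
    rw [hz]
    exact Submodule.zero_mem _
  | succ t ih =>
    intro f hf
    have hIx : ∀ a : Fin 4 → k, ∑ i, a i • x i ∈ I := by
      intro a
      rw [hI]
      exact Submodule.sum_mem _ fun i _ => Submodule.smul_mem _ _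
        (Submodule.subset_span ⟨i, rfl⟩)
    rw [← homogeneousSubmodule_one_pow, pow_succ, homogeneousSubmodule_one_pow] at hf
    refine Submodule.mul_induction_on hf ?_ ?_
    · intro g hg h hh
      have ihg := ih g hg
      set r := F g - algebraMap k A (eval Q g) - ∑ i, eval Q (pderiv i g) • x i with hr
      have hh' := taylor_lin F Q x hxF h hh
      have hg' : F g = algebraMap k A (eval Q g) + ∑ i, eval Q (pderiv i g) • x i + r := by
        rw [hr]; ring
      have hsum : ∑ i, eval Q (pderiv i (g * h)) • x i
          = algebraMap k A (eval Q g) * (∑ i, eval Q (pderiv i h) • x i)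
            + algebraMap k A (eval Q h) * (∑ i, eval Q (pderiv i g) • x i) := by
        rw [Finset.mul_sum, Finset.mul_sum, ← Finset.sum_add_distrib]
        refine Finset.sum_congr rfl fun i _ => ?_
        simp only [Derivation.leibniz, smul_eq_mul, map_add, map_mul, Algebra.smul_def]
        ring
      have hfin : F (g * h) - algebraMap k A (eval Q (g * h))
          - ∑ i, eval Q (pderiv i (g * h)) • x i
          = (∑ i, eval Q (pderiv i g) • x i) * ((∑ i, eval Q (pderiv i h) • x i) * 1)
            + r * F h := by
        rw [hsum, map_mul, map_mul, map_mul, hg']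
        linear_combination (algebraMap k A (eval Q g) + ∑ i, eval Q (pderiv i g) • x i) * hh'
      rw [hfin]
      refine Submodule.add_mem _ ?_ ?_
      · refine Submodule.mul_mem_mul (hIx _) (Submodule.mul_mem_mul (hIx _) ?_)
        have := Submodule.pow_mem_pow U h1U (t + 1)
        simpa using this
      · have hFh : F h ∈ U := by rw [hU]; exact ⟨h, hh, rfl⟩
        have := Submodule.mul_mem_mul ihg hFh
        rwa [mul_assoc, mul_assoc, ← pow_succ] at this
    · intro a b ha hb
      have hadd : F (a + b) - algebraMap k A (eval Q (a + b))
          - ∑ i, eval Q (pderiv i (a + b)) • x i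
          = (F a - algebraMap k A (eval Q a) - ∑ i, eval Q (pderiv i a) • x i)
          + (F b - algebraMap k A (eval Q b) - ∑ i, eval Q (pderiv i b) • x i) := by
        simp only [map_add, add_smul, Finset.sum_add_distrib]
        ring
      rw [hadd]
      exact Submodule.add_mem _ ha hb

variable {ι : Type*}

/-- At a reduced point of a relation there is still a tangent direction constraint in degree 4. -/
theorem exists_tangent [Fintype ι] (P : ι → Fin 4 → k) (L : Fin 4 → k)
    (hLP : ∀ p, ∑ i, L i * P p i = 1) (hPinj : Function.Injective P)
    (d : ℕ) (hd : 17 ≤ d) (w : ι → Fin 4 → k) (c : ι → k) (hLw : ∀ p, ∑ i, L i * w p i = 0)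
    (hrel : IsRel P d w c) (p : ι) (hwp : w p = 0) (hcp : c p ≠ 0) :
    ∃ u : Fin 4 → k, u ≠ 0 ∧ ∑ i, L i * u i = 0 ∧
      ∀ f ∈ homogeneousSubmodule (Fin 4) k 4, jet P w f = 0 → dirDer (P p) u f = 0 := by
  let F := jet P w
  let U : Submodule k (ι → DualNumber k) := (homogeneousSubmodule (Fin 4) k 1).map F.toLinearMap
  have hUt : ∀ t, U ^ t = (homogeneousSubmodule (Fin 4) k t).map F.toLinearMap :=
    fun t => map_homog_pow F t
  have hL1 : F (linForm L) = 1 := jet_one_mem P w L hLP hLw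
  have h1U : (1 : ι → DualNumber k) ∈ U := ⟨linForm L, linForm_mem L, hL1⟩
  let x : Fin 4 → (ι → DualNumber k) := fun i => F (X i) - algebraMap k _ (P p i)
  have hxF : ∀ i, F (X i) = algebraMap k _ (P p i) + x i := fun i => by
    simp only [x]; ring
  have hxU : ∀ i, x i ∈ U := by
    intro i
    refine Submodule.sub_mem _ ⟨X i, isHomogeneous_X k i, rfl⟩ ?_
    rw [Algebra.algebraMap_eq_smul_one]
    exact Submodule.smul_mem _ _ h1U
  have hxq : ∀ i q, (x i q).fst = P q i - P p i := by
    intro i q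
    simp only [x, Pi.sub_apply, TrivSqZeroExt.fst_sub, F, jet_fst, eval_X]
    rfl
  let ev : (ι → DualNumber k) →ₐ[k] k :=
    (TrivSqZeroExt.fstHom k k k).comp (Pi.evalAlgHom k (fun _ => DualNumber k) p)
  have hev : ∀ b, ev b = (b p).fst := fun b => rfl
  have hnot : ∃ i, x i ∉ Submodule.span k (Set.range x) *
      (Submodule.span k (Set.range x) * U ^ 3) := by
    by_contra hcon
    push Not at hcon
    obtain ⟨g, hg, hgp, hgx⟩ := det_trick U h1U x hxU hcon ev (by
      intro i; rw [hev, hxq, sub_self])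
    have hgd : g ∈ U ^ d := pow_mono_of_one_mem U h1U (by omega) hg
    rw [hUt] at hgd
    obtain ⟨f, hf, rfl⟩ := hgd
    change ∀ i, F f * x i = 0 at hgx
    change ev (F f) = 1 at hgp
    have h0 := hrel f hf
    rw [relFun_apply, Finset.sum_eq_single p] at h0
    · rw [jet_snd, hwp, dirDer_zero, zero_add] at h0
      rw [hev] at hgp
      change c p * (F f p).fst = 0 at h0
      rw [hgp, mul_one] at h0
      exact hcp h0
    · intro q _ hq
      have hsep : ∃ i, P q i - P p i ≠ 0 := by
        by_contra hc
        push Not at hc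
        exact hq (hPinj (funext fun i => sub_eq_zero.mp (hc i)))
      obtain ⟨i, hi⟩ := hsep
      have : F f q = 0 := by
        refine dual_mul_eq_zero (b := x i q) ?_ (by rw [hxq]; exact hi)
        exact congrFun (hgx i) q
      change (F f q).snd + c q * (F f q).fst = 0
      rw [this]; simp
    · intro h; exact absurd (Finset.mem_univ p) h
  obtain ⟨i0, hi0⟩ := hnot
  obtain ⟨D, hD, hDle⟩ := Submodule.exists_le_ker_of_notMem hi0
  refine ⟨fun i => D (x i), ?_, ?_, ?_⟩
  · intro h
    exact hD (congrFun h i0)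
  · have : ∑ i, L i • x i = 0 := by
      have h2 : ∑ i, L i • F (X i) = 1 := by
        rw [← hL1]
        simp [linForm]
      simp only [x, smul_sub, Finset.sum_sub_distrib, h2, Algebra.algebraMap_eq_smul_one, smul_smul]
      rw [← Finset.sum_smul, hLP, one_smul, sub_self]
    have h3 := congrArg D this
    simpa using h3
  · intro f hf hJ
    have ht := hDle (taylor_mod F (P p) U _ rfl h1U x hxF rfl 3 f hf)
    have hfp : eval (P p) f = 0 := by rw [← jet_fst P w, hJ]; rfl
    have hJ' : F f = 0 := hJ
    rw [hfp, hJ', map_zero, sub_zero, zero_sub, LinearMap.mem_ker, map_neg, neg_eq_zero,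
      map_sum] at ht
    rw [dirDer, ← ht]
    refine Finset.sum_congr rfl fun i _ => ?_
    rw [map_smul, smul_eq_mul, mul_comm]

end Tangent

section Core

open Module MvPolynomial

variable {k : Type*} [Field k] {ι : Type*}

lemma finrank_map_le_of_ker {V A B : Type*} [AddCommGroup V] [Module k V] [AddCommGroup A]
    [Module k A] [AddCommGroup B] [Module k B] [FiniteDimensional k A]
    (S : Submodule k V) (f : V →ₗ[k] A) (g : V →ₗ[k] B)
    (h : ∀ v ∈ S, f v = 0 → g v = 0) : finrank k (S.map g) ≤ finrank k (S.map f) := by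
  let f' := f.comp S.subtype
  let g' := g.comp S.subtype
  have hr : LinearMap.range f' = S.map f := by
    rw [LinearMap.range_comp, Submodule.range_subtype]
  have hr' : LinearMap.range g' = S.map g := by
    rw [LinearMap.range_comp, Submodule.range_subtype]
  have hk : LinearMap.ker f' ≤ LinearMap.ker g' := fun v hv => h v v.2 hv
  rw [← hr, ← hr']
  let T : (S ⧸ LinearMap.ker f') →ₗ[k] (S ⧸ LinearMap.ker g') :=
    Submodule.factor hk
  have hT : Function.Surjective T := Submodule.factor_surjective hk
  have e1 := f'.quotKerEquivRange
  have e2 := g'.quotKerEquivRange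
  have : FiniteDimensional k (S ⧸ LinearMap.ker f') := Module.Finite.equiv e1.symm
  rw [← e1.finrank_eq, ← e2.finrank_eq]
  exact LinearMap.finrank_le_finrank_of_surjective hT

theorem core [Infinite k] [Fintype ι] [Nonempty ι] (P : ι → Fin 4 → k) (L : Fin 4 → k)
    (hLP : ∀ p, ∑ i, L i * P p i = 1) (hPinj : Function.Injective P)
    (hspan : ∀ a : Fin 4 → k, (∀ p, ∑ i, a i * P p i = 0) → a = 0)
    (d : ℕ) (hd : 17 ≤ d) (hcard : 2 * Fintype.card ι + 2 ≤ 4 * d)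
    (hcard' : 3 * d + 4 ≤ 2 * Fintype.card ι)
    (hmin : ∀ w c, (∀ p, ∑ i, L i * w p i = 0) → IsRel P d w c →
      ∀ p, w p = 0 → c p = 0 → w = 0 ∧ c = 0)
    (hex : ∃ w c, (∀ p, ∑ i, L i * w p i = 0) ∧ IsRel P d w c ∧ ¬ (w = 0 ∧ c = 0)) : False := by
  classical
  obtain ⟨w, c, hLw, hrel, hnz, hch⟩ : ∃ w c, (∀ p, ∑ i, L i * w p i = 0) ∧ IsRel P d w c ∧
      ¬ (w = 0 ∧ c = 0) ∧ ((∃ p, w p = 0) ∨ ∀ w' c', (∀ p, ∑ i, L i * w' p i = 0) →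
        IsRel P d w' c' → ∀ p, w' p = 0 → w' = 0 ∧ c' = 0) := by
    by_cases h : ∃ w c, (∀ p, ∑ i, L i * w p i = 0) ∧ IsRel P d w c ∧ ¬ (w = 0 ∧ c = 0) ∧
        ∃ p, w p = 0
    · obtain ⟨w, c, h1, h2, h3, h4⟩ := h
      exact ⟨w, c, h1, h2, h3, Or.inl h4⟩
    · obtain ⟨w, c, h1, h2, h3⟩ := hex
      refine ⟨w, c, h1, h2, h3, Or.inr fun w' c' h1' h2' p hp => ?_⟩
      by_contra hcon
      exact h ⟨w', c', h1', h2', hcon, p, hp⟩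
  have hne : ∀ p, w p = 0 → c p ≠ 0 := fun p hw hc => hnz (hmin w c hLw hrel p hw hc)
  have hone := stage_one P L hLP hPinj hspan d hd hcard hmin w c hLw hrel hne hch
  have hu : ∀ p, ∃ u : Fin 4 → k, u ≠ 0 ∧ ∑ i, L i * u i = 0 ∧ (w p ≠ 0 → u = w p) ∧
      ∀ f ∈ homogeneousSubmodule (Fin 4) k 4, jet P w f = 0 → dirDer (P p) u f = 0 := by
    intro p
    by_cases hw : w p = 0
    · obtain ⟨u, h1, h2, h3⟩ := exists_tangent P L hLP hPinj d hd w c hLw hrel p hw (hne p hw)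
      exact ⟨u, h1, h2, fun h => absurd hw h, h3⟩
    · refine ⟨w p, hw, hLw p, fun _ => rfl, fun f _ hf => ?_⟩
      rw [← jet_snd, hf]; rfl
  choose u hu0 hLu huw hu4 using hu
  let H : ℕ → ℕ := fun t => finrank k ((homogeneousSubmodule (Fin 4) k t).map (jet P w).toLinearMap)
  have hH0 : H 0 ≤ 1 := by
    have hle : (homogeneousSubmodule (Fin 4) k 0).map (jet P w).toLinearMap
        ≤ Submodule.span k ((({1} : Finset (ι → DualNumber k))) : Set (ι → DualNumber k)) := by
      rw [← map_homog_pow, pow_zero, Submodule.one_eq_span, Finset.coe_singleton]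
    refine (Submodule.finrank_mono hle).trans ?_
    have := finrank_span_finset_le_card (R := k) ({1} : Finset (ι → DualNumber k))
    rw [Finset.card_singleton] at this
    exact this
  have hH4 : H 4 ≤ 13 := by
    have a0 : H 1 ≤ H 0 + 3 := hone 0
    have a1 : H 2 ≤ H 1 + 3 := hone 1
    have a2 : H 3 ≤ H 2 + 3 := hone 2
    have a3 : H 4 ≤ H 3 + 3 := hone 3
    omega
  let U : Submodule k (ι → DualNumber k) :=
    (homogeneousSubmodule (Fin 4) k 1).map (jet P u).toLinearMap
  have hUt : ∀ t, U ^ t = (homogeneousSubmodule (Fin 4) k t).map (jet P u).toLinearMap :=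
    fun t => map_homog_pow (jet P u) t
  have h1U : (1 : ι → DualNumber k) ∈ U :=
    ⟨linForm L, linForm_mem L, jet_one_mem P u L hLP hLu⟩
  have hU4 : finrank k ↥(U ^ 4) ≤ H 4 := by
    rw [hUt]
    refine finrank_map_le_of_ker _ _ _ fun f hf h0 => ?_
    change jet P w f = 0 at h0
    change jet P u f = 0
    funext p
    refine TrivSqZeroExt.ext ?_ ?_
    · rw [jet_fst, ← jet_fst P w, h0]
    · rw [jet_snd, hu4 p f hf h0]; rfl
  have hU3 : H 3 ≤ finrank k ↥(U ^ 3) := by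
    rw [hUt]
    refine finrank_map_le_of_ker _ _ _ fun f hf h0 => ?_
    change jet P u f = 0 at h0
    change jet P w f = 0
    funext p
    refine TrivSqZeroExt.ext ?_ ?_
    · rw [jet_fst, ← jet_fst P u, h0]
    · by_cases hw : w p = 0
      · rw [jet_snd, hw, dirDer_zero]; rfl
      · rw [jet_snd, ← huw p hw, ← jet_snd P u, h0]
  have h43 : finrank k ↥(U ^ 4) ≤ finrank k ↥(U ^ 3) + 3 := by
    have a3 : H 4 ≤ H 3 + 3 := hone 3
    omega
  obtain ⟨y, hy, hgen⟩ := exists_generator U h1U 4 (by norm_num) (by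
    change finrank k ↥(U ^ 4) ≤ finrank k ↥(U ^ 3) + 4
    omega)
  have hanti := diff_antitone U h1U 4 (by norm_num) y hy hgen
  have hstep : ∀ n, finrank k ↥(U ^ (4 + n)) ≤ finrank k ↥(U ^ (3 + n)) + 3 := by
    intro n
    induction n with
    | zero => exact h43
    | succ n ih =>
      have := hanti (4 + n) (by omega)
      have e1 : 4 + n + 1 = 4 + (n + 1) := by omega
      have e2 : 4 + n - 1 = 3 + n := by omega
      have e3 : 3 + (n + 1) = 4 + n := by omega
      rw [e1, e2] at this
      rw [e3]
      omega
  have hUn : ∀ n, finrank k ↥(U ^ (4 + n)) ≤ 13 + 3 * n := by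
    intro n
    induction n with
    | zero => simpa using hU4.trans hH4
    | succ n ih =>
      have := hstep (n + 1)
      have e3 : 3 + (n + 1) = 4 + n := by omega
      rw [e3] at this
      omega
  have hUd : finrank k ↥(U ^ d) ≤ 3 * d + 1 := by
    have := hUn (d - 4)
    have e : 4 + (d - 4) = d := by omega
    rw [e] at this
    omega
  obtain ⟨p0⟩ := ‹Nonempty ι›
  let E : Submodule k (ι → DualNumber k) :=
    LinearMap.range (LinearMap.single k (fun _ : ι => DualNumber k) p0)
  have hE : finrank k E ≤ 2 := by
    have h1 := LinearMap.finrank_range_le (LinearMap.single k (fun _ : ι => DualNumber k) p0)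
    have h : finrank k (DualNumber k) = 2 := by
      change finrank k (k × k) = 2
      rw [finrank_prod, finrank_self]
    rw [h] at h1
    exact h1
  have hlt : U ^ d ⊔ E < ⊤ := by
    rw [lt_top_iff_ne_top]
    intro htop
    have h1 := Submodule.finrank_add_le_finrank_add_finrank (U ^ d) E
    rw [htop, finrank_top, finrank_jetRing] at h1
    omega
  obtain ⟨G, hG0, hG⟩ := Submodule.exists_le_ker_of_lt_top _ hlt
  let b' : ι → k := fun p => G (Pi.single p (TrivSqZeroExt.inr 1))
  let c' : ι → k := fun p => G (Pi.single p (TrivSqZeroExt.inl 1))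
  have hGe : ∀ v : ι → DualNumber k, G v = ∑ p, (b' p * (v p).snd + c' p * (v p).fst) := by
    intro v
    have hv : v = ∑ p, Pi.single p (v p) := (Finset.univ_sum_single v).symm
    conv_lhs => rw [hv]
    rw [map_sum]
    refine Finset.sum_congr rfl fun p _ => ?_
    have hvp : v p = (v p).snd • (TrivSqZeroExt.inr 1 : DualNumber k)
        + (v p).fst • (TrivSqZeroExt.inl 1 : DualNumber k) := by
      refine TrivSqZeroExt.ext ?_ ?_ <;> simp
    conv_lhs => rw [hvp]
    rw [Pi.single_add, Pi.single_smul, Pi.single_smul, map_add, map_smul, map_smul, smul_eq_mul,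
      smul_eq_mul, mul_comm, mul_comm (v p).fst]
  have hres := hmin (fun p => b' p • u p) c' (by
    intro q
    have : ∀ i, L i * (b' q • u q) i = b' q * (L i * u q i) := by
      intro i; simp only [Pi.smul_apply, smul_eq_mul]; ring
    simp only [this]
    rw [← Finset.mul_sum, hLu, mul_zero]) (by
    intro f hf
    have h1 : G (jet P u f) = 0 := hG (Submodule.mem_sup_left (by rw [hUt]; exact ⟨f, hf, rfl⟩))
    rw [hGe] at h1
    rw [← h1, relFun_apply]
    refine Finset.sum_congr rfl fun q _ => ?_
    rw [jet_snd, jet_fst, jet_snd, jet_fst, dirDer_smul]) p0 (by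
    have : b' p0 = 0 := hG (Submodule.mem_sup_right ⟨TrivSqZeroExt.inr 1, rfl⟩)
    simp only [this, zero_smul]) (hG (Submodule.mem_sup_right ⟨TrivSqZeroExt.inl 1, rfl⟩))
  apply hG0
  refine LinearMap.ext fun v => ?_
  rw [hGe, LinearMap.zero_apply]
  refine Finset.sum_eq_zero fun p _ => ?_
  have hb : b' p = 0 := (smul_eq_zero.mp (congrFun hres.1 p)).resolve_right (hu0 p)
  rw [hb, hres.2]
  simp

end Core

section Reduction

open Module MvPolynomial

lemma finrank_homog (k : Type*) [Field k] (d : ℕ) :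
    finrank k (homogeneousSubmodule (Fin 4) k d) = (3 + d).choose 3 := by
  classical
  rw [homogeneousSubmodule_eq_finsupp_supported]
  rw [(AddMonoidAlgebra.supportedEquivFinsupp (R := k) (S := k)
    {m : Fin 4 →₀ ℕ | m.degree = d}).finrank_eq]
  let e : {m : Fin 4 →₀ ℕ | m.degree = d} ≃ Sym (Fin 4) d :=
    (Equiv.subtypeEquivRight (fun m => by rfl)).trans (Sym.equivNatSum (Fin 4) d).symm
  let _ : Fintype {m : Fin 4 →₀ ℕ | m.degree = d} := Fintype.ofEquiv _ e.symm
  rw [Module.finrank_finsupp_self, Fintype.card_congr e, Sym.card_sym_eq_choose]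
  rw [Fintype.card_fin, show 4 + d - 1 = 3 + d by omega]
  exact (Nat.choose_symm_add).symm

lemma eval_smul_homog {k : Type*} [Field k] {n : ℕ} {f : MvPolynomial (Fin 4) k}
    (hf : f.IsHomogeneous n) (a : k) (Q : Fin 4 → k) : eval (a • Q) f = a ^ n * eval Q f := by
  rw [eval_eq', eval_eq', Finset.mul_sum]
  refine Finset.sum_congr rfl fun m hm => ?_
  have hdeg : ∑ i, m i = n := by
    have := hf (mem_support_iff.mp hm)
    rw [← this, Finsupp.weight_apply, Finsupp.sum_fintype _ _ (by simp)]
    simp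
  simp only [Pi.smul_apply, smul_eq_mul, mul_pow, Finset.prod_mul_distrib]
  rw [Finset.prod_pow_eq_pow_sum, hdeg]
  ring

lemma dirDer_smul_point {k : Type*} [Field k] {d : ℕ} {f : MvPolynomial (Fin 4) k}
    (hf : f.IsHomogeneous d) (a : k) (Q v : Fin 4 → k) :
    dirDer (a • Q) v f = a ^ (d - 1) * dirDer Q v f := by
  rw [dirDer, dirDer, Finset.mul_sum]
  refine Finset.sum_congr rfl fun i _ => ?_
  rw [eval_smul_homog hf.pderiv]
  ring

lemma dirDer_euler {k : Type*} [Field k] {d : ℕ} {f : MvPolynomial (Fin 4) k}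
    (hf : f.IsHomogeneous d) (Q : Fin 4 → k) : dirDer Q Q f = d * eval Q f := by
  have := congrArg (eval Q) hf.sum_X_mul_pderiv
  simpa [dirDer] using this

lemma dirDer_add_dir {k : Type*} [Field k] (Q v w : Fin 4 → k) (f : MvPolynomial (Fin 4) k) :
    dirDer Q (v + w) f = dirDer Q v f + dirDer Q w f := by
  simp [dirDer, add_mul, Finset.sum_add_distrib]

lemma mem_doubleVanishing_iff {k : Type*} [Field k] [CharZero k] {d : ℕ} (hd : d ≠ 0)
    {f : MvPolynomial (Fin 4) k} (hf : f.IsHomogeneous d) (v : Fin 4 → k) :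
    f ∈ doubleVanishing k v ↔ ∀ i, eval v (pderiv i f) = 0 := by
  have hev : ∀ g, evalLM k v g = eval v g := fun g => by
    simp [evalLM]
  simp only [doubleVanishing, Submodule.mem_inf, LinearMap.mem_ker, Submodule.mem_iInf,
    LinearMap.comp_apply, hev]
  constructor
  · exact fun h => h.2
  · intro h
    refine ⟨?_, h⟩
    have h2 := dirDer_euler hf v
    have h3 : dirDer v v f = 0 := by simp [dirDer, h]
    rw [h3] at h2
    have hd' : (d : k) ≠ 0 := Nat.cast_ne_zero.mpr hd
    exact (mul_eq_zero.mp h2.symm).resolve_left hd'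

/-- The gradient map on degree `d` forms. -/
noncomputable def gradMap (k : Type*) [Field k] (d : ℕ) (A : Finset (ProjSpace k 3)) :
    homogeneousSubmodule (Fin 4) k d →ₗ[k] (A × Fin 4 → k) :=
  LinearMap.pi fun x =>
    ((evalLM k x.1.1.rep).comp (pderiv x.2).toLinearMap).comp (Submodule.subtype _)

lemma gradMap_apply (k : Type*) [Field k] (d : ℕ) (A : Finset (ProjSpace k 3))
    (f : homogeneousSubmodule (Fin 4) k d) (x : A × Fin 4) :
    gradMap k d A f x = eval x.1.1.rep (pderiv x.2 f.1) := by
  simp [gradMap, evalLM]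

lemma h1_eq (k : Type*) [Field k] [CharZero k] (d : ℕ) (hd : d ≠ 0)
    (A : Finset (ProjSpace k 3)) :
    h1 k 3 d A = (finrank k (A × Fin 4 → k) : ℤ) - finrank k (LinearMap.range (gradMap k d A)) := by
  have hker : h0 k 3 d A = finrank k (LinearMap.ker (gradMap k d A)) := by
    have hle : homogeneousSubmodule (Fin (3+1)) k d ⊓ ⨅ p ∈ A, doubleVanishing k p.rep
      = (LinearMap.ker (gradMap k d A)).map (Submodule.subtype _) := by
      ext f
      simp only [Submodule.mem_inf, Submodule.mem_iInf, Submodule.mem_map, LinearMap.mem_ker]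
      constructor
      · rintro ⟨hf, h⟩
        refine ⟨⟨f, hf⟩, ?_, rfl⟩
        funext x
        rw [gradMap_apply]
        exact (mem_doubleVanishing_iff hd hf _).mp (h x.1.1 x.1.2) x.2
      · rintro ⟨⟨f, hf⟩, h, rfl⟩
        refine ⟨hf, fun p hp => (mem_doubleVanishing_iff hd hf _).mpr fun i => ?_⟩
        rw [← gradMap_apply k d A ⟨f, hf⟩ (⟨p, hp⟩, i), h]
        rfl
    rw [h0, hle]
    exact (LinearEquiv.finrank_eq (Submodule.equivMapOfInjective _
      (Submodule.injective_subtype _) _)).symm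
  have : Module.Finite k (homogeneousSubmodule (Fin 4) k d) := by
    refine Module.finite_of_finrank_pos ?_
    rw [finrank_homog]
    exact Nat.choose_pos (by omega)
  have h2 := LinearMap.finrank_range_add_finrank_ker (gradMap k d A)
  rw [finrank_homog] at h2
  rw [h1, hker, Module.finrank_fintype_fun_eq_card, Fintype.card_prod, Fintype.card_coe,
    Fintype.card_fin, ← h2]
  push_cast
  ring

lemma h1_pos_iff (k : Type*) [Field k] [CharZero k] (d : ℕ) (hd : d ≠ 0)
    (A : Finset (ProjSpace k 3)) :
    0 < h1 k 3 d A ↔ ∃ v : A → Fin 4 → k, v ≠ 0 ∧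
      ∀ f ∈ homogeneousSubmodule (Fin 4) k d, ∑ p, dirDer p.1.rep (v p) f = 0 := by
  classical
  rw [h1_eq k d hd A]
  constructor
  · intro h
    have hlt : LinearMap.range (gradMap k d A) < ⊤ := by
      rw [lt_top_iff_ne_top]
      intro ht
      rw [ht, finrank_top] at h
      omega
    obtain ⟨G, hG0, hG⟩ := Submodule.exists_le_ker_of_lt_top _ hlt
    have hGe : ∀ y, G y = ∑ p : A, ∑ i, G (Pi.single (p, i) 1) * y (p, i) := by
      intro y
      conv_lhs => rw [← LinearMap.sum_single_apply (φ := fun _ : A × Fin 4 => k) y]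
      rw [map_sum, Fintype.sum_prod_type]
      refine Finset.sum_congr rfl fun p _ => Finset.sum_congr rfl fun i _ => ?_
      have : (Pi.single (p, i) (y (p, i)) : A × Fin 4 → k) = y (p, i) • Pi.single (p, i) 1 := by
        rw [← Pi.single_smul, smul_eq_mul, mul_one]
      rw [this, map_smul, smul_eq_mul, mul_comm]
    refine ⟨fun p i => G (Pi.single (p, i) 1), ?_, ?_⟩
    · intro h0
      apply hG0
      refine LinearMap.ext fun y => ?_
      rw [hGe]
      refine Finset.sum_eq_zero fun p _ => Finset.sum_eq_zero fun i _ => ?_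
      have := congrFun (congrFun h0 p) i
      simp only [Pi.zero_apply] at this
      rw [this, zero_mul]
    · intro f hf
      have h1 : G (gradMap k d A ⟨f, hf⟩) = 0 := hG ⟨_, rfl⟩
      rw [hGe] at h1
      simp only [gradMap_apply] at h1
      exact h1
  · rintro ⟨v, hv, hrel⟩
    by_contra hcon
    have htop : LinearMap.range (gradMap k d A) = ⊤ := by
      refine Submodule.eq_top_of_finrank_eq ?_
      have := Submodule.finrank_le (LinearMap.range (gradMap k d A))
      omega
    apply hv
    funext p i
    obtain ⟨⟨f, hf⟩, hfe⟩ : (Pi.single (p, i) 1 : A × Fin 4 → k) ∈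
      LinearMap.range (gradMap k d A) := by rw [htop]; trivial
    have h1 := hrel f hf
    have h2 : ∀ (q : A) (j : Fin 4), eval q.1.rep (pderiv j f)
        = (Pi.single (p, i) 1 : A × Fin 4 → k) (q, j) := by
      intro q j
      rw [← hfe, gradMap_apply]
    simp only [dirDer, h2] at h1
    rw [Finset.sum_eq_single p, Finset.sum_eq_single i] at h1
    · simpa using h1
    · intro j _ hj
      rw [Pi.single_eq_of_ne (by simp [hj]), mul_zero]
    · simp
    · intro q _ hq
      refine Finset.sum_eq_zero fun j _ => ?_
      rw [Pi.single_eq_of_ne (by simp [hq]), mul_zero]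
    · simp

end Reduction

section Final

open Module MvPolynomial

lemma exists_form {k : Type*} [Field k] [Infinite k] {ι : Type*} [Finite ι] (r : ι → Fin 4 → k)
    (hr : ∀ p, r p ≠ 0) : ∃ L : Fin 4 → k, ∀ p, ∑ i, L i * r p i ≠ 0 := by
  classical
  by_contra hcon
  push Not at hcon
  let K : ι → Submodule k (Fin 4 → k) := fun p =>
    LinearMap.ker (Fintype.linearCombination k (fun i => r p i))
  have hK : ∀ p L, L ∈ K p ↔ ∑ i, L i * r p i = 0 := by
    intro p L
    simp [K, Fintype.linearCombination_apply]
  have hcov : ⋃ p, (K p : Set (Fin 4 → k)) = Set.univ := by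
    ext L
    obtain ⟨p, hp⟩ := hcon L
    simp only [Set.mem_iUnion, SetLike.mem_coe, Set.mem_univ, iff_true]
    exact ⟨p, (hK p L).mpr hp⟩
  obtain ⟨p, hp⟩ := Subspace.exists_eq_top_of_iUnion_eq_univ hcov
  apply hr p
  funext j
  have : (Pi.single j 1 : Fin 4 → k) ∈ K p := by rw [hp]; trivial
  rw [hK] at this
  simpa [Pi.single_apply] using this

theorem no_min (k : Type*) [Field k] [CharZero k] (d : ℕ) (hd : 17 ≤ d)
    (S : Finset (ProjSpace k 3)) (hS1 : 3 * d + 4 ≤ 2 * S.card) (hS2 : 2 * S.card + 2 ≤ 4 * d)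
    (hspan : Spans k 3 S) (hpos : 0 < h1 k 3 d S)
    (hmin : ∀ A : Finset (ProjSpace k 3), A ⊂ S → h1 k 3 d A = 0) : False := by
  classical
  have : Infinite k := inferInstance
  have hd0 : d ≠ 0 := by omega
  have hdk : (d : k) ≠ 0 := Nat.cast_ne_zero.mpr hd0
  have hne : Nonempty S := by
    rw [Finset.nonempty_coe_sort, ← Finset.card_pos]; omega
  obtain ⟨L, hL⟩ := exists_form (fun p : S => p.1.rep) fun p => p.1.rep_nonzero
  let lam : S → k := fun p => ∑ i, L i * p.1.rep i
  let P : S → Fin 4 → k := fun p => (lam p)⁻¹ • p.1.rep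
  have hrep : ∀ p : S, p.1.rep = lam p • P p := by
    intro p
    simp only [P]
    rw [smul_smul, mul_inv_cancel₀ (hL p), one_smul]
  have hLs : ∀ (a : k) (v : Fin 4 → k), ∑ i, L i * (a • v) i = a * ∑ i, L i * v i := by
    intro a v
    rw [Finset.mul_sum]
    refine Finset.sum_congr rfl fun i _ => ?_
    simp only [Pi.smul_apply, smul_eq_mul]; ring
  have hLa : ∀ (v v' : Fin 4 → k), ∑ i, L i * (v + v') i = ∑ i, L i * v i + ∑ i, L i * v' i := by
    intro v v'
    rw [← Finset.sum_add_distrib]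
    refine Finset.sum_congr rfl fun i _ => ?_
    simp only [Pi.add_apply]; ring
  have hLP : ∀ p, ∑ i, L i * P p i = 1 := by
    intro p
    rw [hLs]
    exact inv_mul_cancel₀ (hL p)
  have hPinj : Function.Injective P := by
    intro p q hpq
    apply Subtype.ext
    rw [← p.1.mk_rep, ← q.1.mk_rep, Projectivization.mk_eq_mk_iff']
    refine ⟨lam p * (lam q)⁻¹, ?_⟩
    rw [hrep p, hpq, mul_smul]
  refine core P L hLP hPinj ?_ d hd ?_ ?_ ?_ ?_
  · intro a ha
    let φ : (Fin 4 → k) →ₗ[k] k := Fintype.linearCombination k a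
    have hφ : ∀ v, φ v = ∑ i, a i * v i := by
      intro v
      simp [φ, Fintype.linearCombination_apply, mul_comm]
    have hle : (⊤ : Submodule k (Fin 4 → k)) ≤ LinearMap.ker φ := by
      rw [← (show Submodule.span k (Projectivization.rep '' (S : Set (ProjSpace k 3))) = ⊤
        from hspan), Submodule.span_le]
      rintro _ ⟨p, hp, rfl⟩
      have h1 : φ (P ⟨p, hp⟩) = 0 := by rw [hφ]; exact ha ⟨p, hp⟩
      have h2 : φ p.rep = 0 := by
        have := hrep ⟨p, hp⟩
        simp only at this
        rw [this, map_smul, h1, smul_zero]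
      exact h2
    funext j
    have := hle (Submodule.mem_top (x := (Pi.single j 1 : Fin 4 → k)))
    rw [LinearMap.mem_ker, hφ] at this
    simpa [Pi.single_apply] using this
  · rw [Fintype.card_coe]; exact hS2
  · rw [Fintype.card_coe]; exact hS1
  · intro w c hLw hrel p0 hw0 hc0
    have hz : ∀ p : S, p ≠ p0 → w p + (c p / d) • P p = 0 := by
      by_contra hcon
      push Not at hcon
      obtain ⟨p1, hp1, hne1⟩ := hcon
      have hA := hmin (S.erase p0.1) (Finset.erase_ssubset p0.2)
      have hA' : 0 < h1 k 3 d (S.erase p0.1) := by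
        rw [h1_pos_iff k d hd0]
        let V : S → Fin 4 → k := fun p => ((lam p) ^ (d - 1))⁻¹ • (w p + (c p / d) • P p)
        refine ⟨fun p => V ⟨p.1, Finset.mem_of_mem_erase p.2⟩, ?_, ?_⟩
        · intro h0
          have h2 : V p1 = 0 := congrFun h0 ⟨p1.1, Finset.mem_erase.mpr
            ⟨fun h => hp1 (Subtype.ext h), p1.2⟩⟩
          exact hne1 ((smul_eq_zero.mp h2).resolve_left (inv_ne_zero (pow_ne_zero _ (hL p1))))
        · intro f hf
          have hterm : ∀ p : S, dirDer p.1.rep (V p) f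
              = (jet P w f p).snd + c p * (jet P w f p).fst := by
            intro p
            rw [hrep p, dirDer_smul_point hf, dirDer_smul, ← mul_assoc,
              mul_inv_cancel₀ (pow_ne_zero _ (hL p)), one_mul, dirDer_add_dir, dirDer_smul,
              dirDer_euler hf, jet_snd, jet_fst]
            field_simp
          have h0 := hrel f hf
          rw [relFun_apply] at h0
          simp only [← hterm] at h0
          have hp0 : dirDer p0.1.rep (V p0) f = 0 := by
            simp only [V, hw0, hc0, zero_div, zero_smul, add_zero, smul_zero, dirDer_zero]
          let T : ProjSpace k 3 → k := fun p =>
            if hp : p ∈ S then dirDer p.rep (V ⟨p, hp⟩) f else 0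
          have hT : ∀ p : S, dirDer p.1.rep (V p) f = T p.1 := by
            intro p
            simp only [T, dif_pos p.2]
          have e1 : ∑ p : S, T p.1 = ∑ p ∈ S, T p := Finset.sum_coe_sort S T
          have e2 : ∑ p : ↥(S.erase p0.1), T p.1 = ∑ p ∈ S.erase p0.1, T p :=
            Finset.sum_coe_sort _ T
          have e3 := Finset.add_sum_erase S T p0.2
          simp only [hT] at h0
          rw [hT] at hp0
          have e4 : ∀ p : ↥(S.erase p0.1),
              dirDer p.1.rep (V ⟨p.1, Finset.mem_of_mem_erase p.2⟩) f = T p.1 :=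
            fun p => hT ⟨p.1, Finset.mem_of_mem_erase p.2⟩
          simp only [e4]
          rw [e2]
          rw [e1, ← e3, hp0, zero_add] at h0
          exact h0
      omega
    have hcz : ∀ p, c p = 0 := by
      intro p
      by_cases hp : p = p0
      · rw [hp, hc0]
      · have h1 := hz p hp
        have h2 : ∑ i, L i * (w p + (c p / d) • P p) i = 0 := by rw [h1]; simp
        rw [hLa, hLs, hLw, hLP, zero_add, mul_one] at h2
        exact (div_eq_zero_iff.mp h2).resolve_right hdk
    refine ⟨?_, funext hcz⟩
    funext p
    by_cases hp : p = p0
    · rw [hp, hw0]; rfl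
    · have h1 := hz p hp
      rw [hcz p, zero_div, zero_smul, add_zero] at h1
      exact h1
  · obtain ⟨v, hv, hrel⟩ := (h1_pos_iff k d hd0 S).mp hpos
    let v' : S → Fin 4 → k := fun p => (lam p) ^ (d - 1) • v p
    let b : S → k := fun p => ∑ i, L i * v' p i
    refine ⟨fun p => v' p + (-b p) • P p, fun p => d * b p, ?_, ?_, ?_⟩
    · intro p
      have h1 : ∑ i, L i * ((-b p) • P p) i = -b p := by rw [hLs, hLP, mul_one]
      rw [hLa, h1]
      exact add_neg_cancel (b p)
    · intro f hf
      rw [← hrel f hf, relFun_apply]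
      refine Finset.sum_congr rfl fun p _ => ?_
      have h1 : dirDer p.1.rep (v p) f = dirDer (P p) (v' p) f := by
        rw [hrep p, dirDer_smul_point hf, dirDer_smul]
      rw [h1, jet_snd, jet_fst, dirDer_add_dir, dirDer_smul (P p) (P p), dirDer_euler hf]
      ring
    · rintro ⟨h1, h2⟩
      apply hv
      funext p
      have hb : b p = 0 := (mul_eq_zero.mp (congrFun h2 p)).resolve_left hdk
      have h3 : v' p + (-b p) • P p = 0 := congrFun h1 p
      rw [hb, neg_zero, zero_smul, add_zero] at h3
      exact (smul_eq_zero.mp h3).resolve_left (pow_ne_zero _ (hL p))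

end Final


/-- Theorem: for `d ≥ 17` and `1 + ⌈3d/2⌉ < x < 2d`, `T(3,d;x)' = ∅`. -/
theorem minTerracini_P3_gap
    (k : Type*) [Field k] [IsAlgClosed k] [CharZero k]
    (d x : ℕ) (hd : 17 ≤ d) (hx1 : 1 + (3 * d + 1) / 2 < x) (hx2 : x < 2 * d) :
    minTerracini k 3 d x = ∅ := by
  rw [Set.eq_empty_iff_forall_notMem]
  rintro S ⟨⟨hc, hspan, _, hpos⟩, hmin⟩
  exact no_min k d hd S (by omega) (by omega) hspan hpos hmin
end

section
/- For every integer d ≥ 5, T(3,d;2d)' ≠ ∅; that is, there exists a set S of 2d points in P^3 which is minimally Terracini with respect to O(d) (such sets are obtained as divisors in the square root of the degree-d linear system on a linearly normal elliptic curve in P^3, the smooth complete intersection of two quadric surfaces). In particular, the bound x < 2d in the emptiness theorem for T(3,d;x)' is sharp. -/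
open MvPolynomial

namespace MinTerr

open Polynomial in
/-- The parametrization of the nodal quartic. -/
noncomputable def Gam (k : Type*) [Field k] : Fin 4 → Polynomial k :=
  ![1 + Polynomial.X ^ 4, Polynomial.X, Polynomial.X ^ 2, Polynomial.X ^ 3]

/-- The points of the nodal quartic. -/
def gam {k : Type*} [Field k] (t : k) : Fin 4 → k := ![1 + t ^ 4, t, t ^ 2, t ^ 3]

/-- The tangent vector. -/
def dgam {k : Type*} [Field k] (t : k) : Fin 4 → k := ![4 * t ^ 3, 1, 2 * t, 3 * t ^ 2]

section

variable {k : Type*} [Field k]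

lemma eval_Gam (t : k) (i : Fin 4) : (Gam k i).eval t = gam t i := by
  fin_cases i <;> simp [Gam, gam]

lemma eval_dGam (t : k) (i : Fin 4) : (Polynomial.derivative (Gam k i)).eval t = dgam t i := by
  fin_cases i <;> simp [Gam, dgam] <;> norm_num

lemma eval_aeval (f : MvPolynomial (Fin 4) k) (t : k) :
    (aeval (Gam k) f).eval t = eval (gam t) f := by
  have h : (Polynomial.evalRingHom t).comp (aeval (Gam k) : _ →ₐ[k] Polynomial k).toRingHom
      = (eval (gam t) : MvPolynomial (Fin 4) k →+* k) := by
    apply MvPolynomial.ringHom_ext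
    · intro r; simp
    · intro i; simp [eval_Gam]
  exact congrArg (fun g => g f) h

lemma deriv_aeval (f : MvPolynomial (Fin 4) k) :
    Polynomial.derivative (aeval (Gam k) f) =
      ∑ i, aeval (Gam k) (pderiv i f) * Polynomial.derivative (Gam k i) := by
  induction f using MvPolynomial.induction_on with
  | C a => simp
  | add p q hp hq => simp [hp, hq, add_mul, Finset.sum_add_distrib]
  | mul_X p n hp =>
    have h1 : ∀ i, aeval (Gam k) (pderiv i (p * X n)) * Polynomial.derivative (Gam k i) =
        aeval (Gam k) (pderiv i p) * Polynomial.derivative (Gam k i) * Gam k n +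
        (if i = n then aeval (Gam k) p * Polynomial.derivative (Gam k n) else 0) := by
      intro i
      rw [pderiv_mul, map_add, map_mul, map_mul, aeval_X, pderiv_X]
      split_ifs with h
      · subst h; simp; ring
      · rw [Pi.single_eq_of_ne (fun e => h e.symm)]; simp; ring
    rw [map_mul, aeval_X, Polynomial.derivative_mul, hp, Finset.sum_congr rfl fun i _ => h1 i,
      Finset.sum_add_distrib, Finset.sum_mul, Finset.sum_ite_eq' Finset.univ n]
    simp

lemma eval_deriv_aeval (f : MvPolynomial (Fin 4) k) (t : k) :
    (Polynomial.derivative (aeval (Gam k) f)).eval t =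
      ∑ i, dgam t i * eval (gam t) (pderiv i f) := by
  rw [deriv_aeval, Polynomial.eval_finsetSum]
  exact Finset.sum_congr rfl fun i _ => by
    rw [Polynomial.eval_mul, eval_aeval, eval_dGam, mul_comm]

lemma euler {f : MvPolynomial (Fin 4) k} {d : ℕ} (hf : f.IsHomogeneous d) (v : Fin 4 → k) :
    ∑ i, v i * eval v (pderiv i f) = d * eval v f := by
  have := congrArg (eval v) hf.sum_X_mul_pderiv
  simpa [map_sum] using this

lemma eval_smul_hom {f : MvPolynomial (Fin 4) k} {d : ℕ} (hf : f.IsHomogeneous d) (a : k)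
    (v : Fin 4 → k) : eval (a • v) f = a ^ d * eval v f := by
  rw [eval_eq, eval_eq, Finset.mul_sum]
  refine Finset.sum_congr rfl fun m hm => ?_
  have hd := hf.degree_eq_sum_deg_support hm
  simp only [Pi.smul_apply, smul_eq_mul, mul_pow, Finset.prod_mul_distrib]
  have : ∏ i ∈ m.support, a ^ m i = a ^ d := by
    rw [Finset.prod_pow_eq_pow_sum, hd]
  rw [this]; ring

lemma finrank_hom (d : ℕ) : Module.finrank k (homogeneousSubmodule (Fin 4) k d) =
    (3 + d).choose 3 := by
  classical
  rw [homogeneousSubmodule_eq_finsupp_supported]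
  rw [(AddMonoidAlgebra.supportedEquivFinsupp {m : Fin 4 →₀ ℕ | m.degree = d}).finrank_eq]
  have e : {m : Fin 4 →₀ ℕ | m.degree = d} = ((Finset.univ : Finset (Fin 4)).finsuppAntidiag d : Set (Fin 4 →₀ ℕ)) := by
    ext m
    simp [Finset.mem_finsuppAntidiag, Finsupp.degree_eq_sum]
  rw [e, Module.finrank_finsupp_self]
  simp only [Finset.coe_sort_coe, Fintype.card_coe]
  rw [Finset.card_finsuppAntidiag_nat_eq_choose]
  simp
  rw [Nat.choose_symm_add]

lemma pow_lift (m : ℕ) (hm : 1 ≤ m) : ∀ j, 1 ≤ j → j ≤ 4 * m - 1 →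
    ∃ f : MvPolynomial (Fin 4) k, f.IsHomogeneous m ∧ aeval (Gam k) f = Polynomial.X ^ j := by
  induction m, hm using Nat.le_induction with
  | base =>
    intro j h1 h2
    have : j = 1 ∨ j = 2 ∨ j = 3 := by omega
    rcases this with rfl | rfl | rfl
    · exact ⟨X 1, isHomogeneous_X _ _, by simp [Gam]⟩
    · exact ⟨X 2, isHomogeneous_X _ _, by simp [Gam]⟩
    · exact ⟨X 3, isHomogeneous_X _ _, by simp [Gam]⟩
  | succ m hm ih =>
    have mid : ∀ j, 2 ≤ j → j ≤ 4 * m + 2 → ∃ f : MvPolynomial (Fin 4) k,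
        f.IsHomogeneous (m + 1) ∧ aeval (Gam k) f = Polynomial.X ^ j := by
      intro j h1 h2
      by_cases h : j ≤ 4 * m
      · obtain ⟨f, hf, e⟩ := ih (j - 1) (by omega) (by omega)
        refine ⟨f * X 1, hf.mul (isHomogeneous_X _ _), ?_⟩
        rw [map_mul, e, aeval_X]
        simp only [Gam, Matrix.cons_val]
        rw [← pow_succ]; congr 1; omega
      · obtain ⟨f, hf, e⟩ := ih (j - 3) (by omega) (by omega)
        refine ⟨f * X 3, hf.mul (isHomogeneous_X _ _), ?_⟩
        rw [map_mul, e, aeval_X]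
        simp only [Gam, Matrix.cons_val]
        rw [← pow_add]; congr 1; omega
    intro j h1 h2
    by_cases ha : j = 1
    · obtain ⟨f, hf, e⟩ := ih 1 (by omega) (by omega)
      obtain ⟨g, hg, e'⟩ := mid 5 (by omega) (by omega)
      refine ⟨f * X 0 - g, (hf.mul (isHomogeneous_X _ _)).sub hg, ?_⟩
      rw [map_sub, map_mul, e, e', aeval_X, ha]
      simp only [Gam, Matrix.cons_val]
      ring
    by_cases hb : j = 4 * m + 3
    · obtain ⟨f, hf, e⟩ := ih (4 * m - 1) (by omega) (by omega)
      obtain ⟨g, hg, e'⟩ := mid (4 * m - 1) (by omega) (by omega)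
      refine ⟨f * X 0 - g, (hf.mul (isHomogeneous_X _ _)).sub hg, ?_⟩
      rw [map_sub, map_mul, e, e', aeval_X]
      simp only [Gam, Matrix.cons_val]
      rw [show j = 4 * m - 1 + 4 by omega]
      ring
    exact mid j (by omega) (by omega)

lemma poly_lift (m : ℕ) (hm : 1 ≤ m) (P : Polynomial k) (hP : P.natDegree + 1 ≤ 4 * m - 1) :
    ∃ f : MvPolynomial (Fin 4) k, f.IsHomogeneous m ∧ aeval (Gam k) f = P * Polynomial.X := by
  have key : ∀ i ∈ Finset.range (P.natDegree + 1), ∃ f : MvPolynomial (Fin 4) k,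
      f.IsHomogeneous m ∧ aeval (Gam k) f = Polynomial.X ^ (i + 1) := fun i hi =>
    pow_lift m hm (i + 1) (by omega) (by have := Finset.mem_range.1 hi; omega)
  choose! F hF hF' using key
  refine ⟨∑ i ∈ Finset.range (P.natDegree + 1), C (P.coeff i) * F i,
    IsHomogeneous.sum _ _ _ fun i hi => (hF i hi).C_mul _, ?_⟩
  conv_rhs => rw [P.as_sum_range_C_mul_X_pow, Finset.sum_mul]
  rw [map_sum]
  refine Finset.sum_congr rfl fun i hi => ?_
  rw [map_mul, hF' i hi, pow_succ, ← mul_assoc]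
  congr 1
  simp

/-- first and last coefficient agree. -/
lemma coeff_aeval {f : MvPolynomial (Fin 4) k} {d : ℕ} (hf : f.IsHomogeneous d) :
    (aeval (Gam k) f).natDegree ≤ 4 * d ∧
      (aeval (Gam k) f).coeff 0 = (aeval (Gam k) f).coeff (4 * d) := by
  have mono : ∀ m : Fin 4 →₀ ℕ, m.degree = d → ∀ a : k,
      (aeval (Gam k) (monomial m a)).natDegree ≤ 4 * d ∧
      (aeval (Gam k) (monomial m a)).coeff 0 = (aeval (Gam k) (monomial m a)).coeff (4 * d) := by
    intro m hm a
    have hm' : m 0 + m 1 + m 2 + m 3 = d := by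
      rw [← hm, Finsupp.degree_eq_sum, Fin.sum_univ_four]
    have e : aeval (Gam k) (monomial m a) = Polynomial.C a * ((1 + Polynomial.X ^ 4) ^ m 0 *
        Polynomial.X ^ (m 1 + 2 * m 2 + 3 * m 3)) := by
      rw [aeval_monomial, Finsupp.prod_fintype _ _ (by simp), Fin.prod_univ_four]
      simp only [Gam, Matrix.cons_val, Polynomial.algebraMap_eq]
      ring
    have hdeg : ((1 + Polynomial.X ^ 4 : Polynomial k) ^ m 0).natDegree = 4 * m 0 := by
      rw [Polynomial.natDegree_pow, show (1 + Polynomial.X ^ 4 : Polynomial k).natDegree = 4 by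
        compute_degree!, mul_comm]
    have hmon : ((1 + Polynomial.X ^ 4 : Polynomial k) ^ m 0).Monic := by
      apply Polynomial.Monic.pow; monicity!
    have hle : ((1 + Polynomial.X ^ 4 : Polynomial k) ^ m 0 *
        Polynomial.X ^ (m 1 + 2 * m 2 + 3 * m 3)).natDegree ≤
        4 * m 0 + (m 1 + 2 * m 2 + 3 * m 3) := by
      refine Polynomial.natDegree_mul_le.trans ?_
      simp [hdeg]
    rw [e]
    refine ⟨(Polynomial.natDegree_C_mul_le _ _).trans (hle.trans (by omega)), ?_⟩
    rw [Polynomial.coeff_C_mul, Polynomial.coeff_C_mul]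
    congr 1
    by_cases h : m 1 + 2 * m 2 + 3 * m 3 = 0
    · have : 4 * d = ((1 + Polynomial.X ^ 4 : Polynomial k) ^ m 0).natDegree := by omega
      rw [h, pow_zero, mul_one, this, hmon.coeff_natDegree]
      simp [Polynomial.coeff_zero_eq_eval_zero]
    · rw [Polynomial.coeff_eq_zero_of_natDegree_lt (n := 4 * d) (lt_of_le_of_lt hle (by omega))]
      simp [Polynomial.coeff_zero_eq_eval_zero]
      omega
  rw [f.as_sum]
  rw [map_sum]
  have key := fun m hm => mono m (hf.degree_eq_sum_deg_support hm).symm (coeff m f)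
  refine ⟨Polynomial.natDegree_sum_le_of_forall_le _ _ fun m hm => (key m hm).1, ?_⟩
  rw [Polynomial.finsetSum_coeff, Polynomial.finsetSum_coeff]
  exact Finset.sum_congr rfl fun m hm => (key m hm).2


lemma gam_ne_zero (t : k) : gam t ≠ 0 := by
  intro h
  have h1 : gam t 1 = 0 := by rw [h]; rfl
  have h0 : gam t 0 = 0 := by rw [h]; rfl
  simp only [gam, Matrix.cons_val] at h0 h1
  simp [h1] at h0

/-- The point of projective space. -/
noncomputable def pt (t : k) : ProjSpace k 3 := Projectivization.mk k (gam t) (gam_ne_zero t)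

lemma pt_injective : Function.Injective (pt : k → ProjSpace k 3) := by
  intro s t h
  obtain ⟨a, ha⟩ := (Projectivization.mk_eq_mk_iff' k _ _ _ _).1 h
  have ha0 : a ≠ 0 := by
    rintro rfl
    exact gam_ne_zero s (by rw [← ha, zero_smul])
  have h1 : a * t = s := by simpa [gam] using congrFun ha 1
  have h2 : a * t ^ 2 = s ^ 2 := by simpa [gam] using congrFun ha 2
  by_cases ht : t = 0
  · rw [ht, ← h1, ht, mul_zero]
  · have : a * t * (t - s) = 0 := by rw [mul_sub]; nth_rewrite 2 [h1]; linear_combination h2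
    have := (mul_eq_zero.1 this).resolve_left (mul_ne_zero ha0 ht)
    exact (sub_eq_zero.1 this).symm

/-- The gradient map at the points with parameters in `T`. -/
noncomputable def Phi (d : ℕ) (T : Finset k) :
    homogeneousSubmodule (Fin 4) k d →ₗ[k] (T → Fin 4 → k) :=
  (LinearMap.pi fun t : T => LinearMap.pi fun i : Fin 4 =>
    (evalLM k (gam (t : k))).comp (MvPolynomial.pderiv i).toLinearMap).comp
    (homogeneousSubmodule (Fin 4) k d).subtype

lemma Phi_apply (d : ℕ) (T : Finset k) (f : homogeneousSubmodule (Fin 4) k d) (t : T)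
    (i : Fin 4) : Phi d T f t i = eval (gam (t : k)) (pderiv i f.1) := by
  simp [Phi, evalLM, aeval_eq_eval]

lemma mem_dv [CharZero k] {d : ℕ} (hd : 1 ≤ d) {f : MvPolynomial (Fin 4) k}
    (hf : f.IsHomogeneous d) (t : k) :
    f ∈ doubleVanishing k (pt t).rep ↔ ∀ i, eval (gam t) (pderiv i f) = 0 := by
  obtain ⟨a, ha⟩ := Projectivization.exists_smul_eq_mk_rep k (gam t) (gam_ne_zero t)
  have ha' : (pt t).rep = (a : k) • gam t := ha.symm
  have hg : ∀ i, eval (pt t).rep (pderiv i f) = (a : k) ^ (d - 1) * eval (gam t) (pderiv i f) := by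
    intro i
    rw [ha']
    exact eval_smul_hom hf.pderiv _ _
  have hk : f ∈ doubleVanishing k (pt t).rep ↔
      eval (pt t).rep f = 0 ∧ ∀ i, eval (pt t).rep (pderiv i f) = 0 := by
    simp [doubleVanishing, evalLM, aeval_eq_eval, Submodule.mem_iInf]
  rw [hk]
  constructor
  · rintro ⟨_, h⟩ i
    have := h i
    rw [hg] at this
    exact (mul_eq_zero.1 this).resolve_left (pow_ne_zero _ a.ne_zero)
  · intro h
    have h' : ∀ i, eval (pt t).rep (pderiv i f) = 0 := fun i => by rw [hg, h, mul_zero]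
    refine ⟨?_, h'⟩
    have := euler hf (pt t).rep
    simp only [h', mul_zero, Finset.sum_const_zero] at this
    exact (mul_eq_zero.1 this.symm).resolve_left (Nat.cast_ne_zero.2 (by omega))

lemma h0_eq [CharZero k] [DecidableEq (ProjSpace k 3)] {d : ℕ} (hd : 1 ≤ d) (T : Finset k) :
    h0 k 3 d (T.image pt) = Module.finrank k (LinearMap.ker (Phi d T)) := by
  rw [h0, ← Submodule.finrank_map_subtype_eq]
  have : (homogeneousSubmodule (Fin (3+1)) k d ⊓ ⨅ p ∈ T.image pt, doubleVanishing k p.rep) =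
      (LinearMap.ker (Phi d T)).map (homogeneousSubmodule (Fin 4) k d).subtype := by
    ext f
    simp only [Submodule.mem_inf, Submodule.mem_iInf, Finset.mem_image, Submodule.mem_map,
      LinearMap.mem_ker, Submodule.subtype_apply]
    constructor
    · rintro ⟨hf, h⟩
      refine ⟨⟨f, hf⟩, ?_, rfl⟩
      ext t i
      rw [Phi_apply]
      exact (mem_dv hd hf t).1 (h _ ⟨t, t.2, rfl⟩) i
    · rintro ⟨g, hg, rfl⟩
      refine ⟨g.2, ?_⟩
      rintro p ⟨t, ht, rfl⟩
      refine (mem_dv hd g.2 t).2 fun i => ?_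
      have := congrFun (congrFun hg ⟨t, ht⟩) i
      rwa [Phi_apply] at this
  rw [this]

instance fin_hom (d : ℕ) : Module.Finite k (homogeneousSubmodule (Fin 4) k d) :=
  Module.Finite.iff_fg.2 (homogeneousSubmodule_fg _ _ d)

lemma rank_add [CharZero k] [DecidableEq (ProjSpace k 3)] {d : ℕ} (hd : 1 ≤ d) (T : Finset k) :
    Module.finrank k (LinearMap.range (Phi d T)) + h0 k 3 d (T.image pt) = (3 + d).choose 3 := by
  rw [h0_eq hd, LinearMap.finrank_range_add_finrank_ker, finrank_hom]

lemma finrank_target (T : Finset k) : Module.finrank k (T → Fin 4 → k) = 4 * T.card := by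
  rw [Module.finrank_pi_fintype]
  simp [mul_comm]

lemma h1_eq [CharZero k] [DecidableEq (ProjSpace k 3)] {d : ℕ} (hd : 1 ≤ d) (T : Finset k) :
    h1 k 3 d (T.image pt) = 4 * T.card - Module.finrank k (LinearMap.range (Phi d T)) := by
  have h := rank_add hd T
  rw [h1, Finset.card_image_of_injective _ pt_injective, ← h]
  push_cast
  ring

/-- Extension of a dual functional to coordinates. -/
lemma dual_coord (T : Finset k) (φ : (T → Fin 4 → k) →ₗ[k] k) :
    ∃ c : k → Fin 4 → k, ∀ x : k → Fin 4 → k,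
      φ (fun t => x t) = ∑ t ∈ T, ∑ i, c t i * x t i := by
  classical
  refine ⟨fun t i => if h : t ∈ T then φ (Pi.single ⟨t, h⟩ (Pi.single i 1)) else 0, fun x => ?_⟩
  rw [← Finset.sum_coe_sort T]
  have : (fun t : T => x t) = ∑ t : T, ∑ i, x t i • (Pi.single t (Pi.single i 1) : T → Fin 4 → k) := by
    ext s j
    rw [Finset.sum_apply, Finset.sum_apply]
    rw [Finset.sum_eq_single s]
    · rw [Finset.sum_apply, Finset.sum_apply, Finset.sum_eq_single j]
      · simp
      · intro b _ hb; simp [Pi.single_apply, hb.symm]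
      · simp
    · intro b _ hb; simp [Finset.sum_apply, Pi.single_apply, hb.symm]
    · simp
  conv_lhs => rw [this]
  simp [map_sum, mul_comm]

lemma surj [CharZero k] {d : ℕ} (hd : 5 ≤ d) (T : Finset k) (h0T : ∀ t ∈ T, t ≠ 0)
    (hT : T.card + 1 ≤ 2 * d) : LinearMap.range (Phi d T) = ⊤ := by
  classical
  by_contra hne
  obtain ⟨φ, hφ, hle⟩ := Submodule.exists_le_ker_of_lt_top _ (lt_top_iff_ne_top.2 hne)
  apply hφ
  obtain ⟨c, hc⟩ := dual_coord T φ
  have hrel : ∀ f : MvPolynomial (Fin 4) k, f.IsHomogeneous d →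
      ∑ t ∈ T, ∑ i, c t i * eval (gam t) (pderiv i f) = 0 := by
    intro f hf
    have : φ (Phi d T ⟨f, hf⟩) = 0 := hle ⟨_, rfl⟩
    rw [← hc fun t i => eval (gam t) (pderiv i f), ← this]
    congr 1
  -- residual conditions
  have hq : ∀ q : MvPolynomial (Fin 4) k, q.IsHomogeneous 2 → (∀ t : k, eval (gam t) q = 0) →
      ∀ s ∈ T, ∑ i, c s i * eval (gam s) (pderiv i q) = 0 := by
    intro q hq hv s hs
    obtain ⟨a, ha, ha'⟩ := poly_lift (d - 2) (by omega)
      (∏ r ∈ T.erase s, (Polynomial.X - Polynomial.C r)) (by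
        rw [Polynomial.natDegree_prod_of_monic _ _ fun r _ => Polynomial.monic_X_sub_C r]
        simp [Finset.card_erase_of_mem hs]
        omega)
    have hev : ∀ t, eval (gam t) a = (∏ r ∈ T.erase s, (t - r)) * t := by
      intro t
      rw [← eval_aeval, ha', Polynomial.eval_mul, Polynomial.eval_prod]
      simp
    have h := hrel (a * q) (by
      have := ha.mul hq
      rwa [show d - 2 + 2 = d by omega] at this)
    have hterm : ∀ t, ∑ i, c t i * eval (gam t) (pderiv i (a * q)) =
        eval (gam t) a * ∑ i, c t i * eval (gam t) (pderiv i q) := by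
      intro t
      rw [Finset.mul_sum]
      refine Finset.sum_congr rfl fun i _ => ?_
      rw [pderiv_mul, map_add, map_mul, map_mul, hv t]
      ring
    rw [Finset.sum_congr rfl fun t _ => hterm t, Finset.sum_eq_single s] at h
    · refine (mul_eq_zero.1 h).resolve_left ?_
      rw [hev]
      refine mul_ne_zero (Finset.prod_ne_zero_iff.2 fun r hr => ?_) (h0T s hs)
      exact sub_ne_zero.2 (Finset.ne_of_mem_erase hr).symm
    · intro t ht hts
      rw [hev, Finset.prod_eq_zero (Finset.mem_erase.2 ⟨hts, ht⟩) (sub_self t)]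
      simp
    · intro h; exact absurd hs h
  -- the vectors are tangent
  have htan : ∀ s ∈ T, ∃ α β : k, ∀ i, c s i = α * gam s i + β * dgam s i := by
    intro s hs
    have hs0 := h0T s hs
    have e1 := hq (X 1 * X 3 - X 2 ^ 2)
      (((isHomogeneous_X _ _).mul (isHomogeneous_X _ _)).sub (isHomogeneous_X_pow _ 2))
      (by intro t; simp [gam]; ring) s hs
    have e2 := hq (X 0 * X 2 - X 1 ^ 2 - X 3 ^ 2)
      ((((isHomogeneous_X _ _).mul (isHomogeneous_X _ _)).sub (isHomogeneous_X_pow _ 2)).sub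
        (isHomogeneous_X_pow _ 2))
      (by intro t; simp [gam]; ring) s hs
    simp [Fin.sum_univ_four, pderiv_X, Pi.single_apply, gam] at e1 e2
    refine ⟨(c s 1 - (c s 2 - s * c s 1) / s) / s, (c s 2 - s * c s 1) / s, ?_⟩
    have e3 : c s 3 = 2 * s * c s 2 - s ^ 2 * c s 1 := by
      apply mul_left_cancel₀ hs0
      linear_combination e1
    have e4 : s ^ 2 * c s 0 = 2 * s * c s 1 - (1 + s ^ 4) * c s 2 + 2 * s ^ 3 * c s 3 := by
      linear_combination e2
    rw [e3] at e4
    intro i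
    fin_cases i
    · apply mul_left_cancel₀ (pow_ne_zero 2 hs0)
      refine e4.trans ?_
      simp only [gam, dgam, Fin.zero_eta, Matrix.cons_val]
      field_simp
      ring
    · simp [gam, dgam]
      field_simp
      ring
    · simp [gam, dgam]
      field_simp
      ring
    · simp [gam, dgam]
      rw [e3]
      field_simp
      ring
  choose! α β hαβ using htan
  have hrel2 : ∀ f : MvPolynomial (Fin 4) k, f.IsHomogeneous d →
      ∑ t ∈ T, (α t * (d * (aeval (Gam k) f).eval t) +
        β t * (Polynomial.derivative (aeval (Gam k) f)).eval t) = 0 := by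
    intro f hf
    rw [← hrel f hf]
    refine Finset.sum_congr rfl fun t ht => ?_
    rw [eval_aeval, ← euler hf, eval_deriv_aeval, Finset.mul_sum, Finset.mul_sum,
      ← Finset.sum_add_distrib]
    refine Finset.sum_congr rfl fun i _ => ?_
    rw [hαβ t ht]; ring
  have hrel3 : ∀ P : Polynomial k, P.natDegree + 1 ≤ 4 * d - 1 →
      ∑ t ∈ T, (α t * (d * (P.eval t * t)) +
        β t * ((Polynomial.derivative P).eval t * t + P.eval t)) = 0 := by
    intro P hP
    obtain ⟨f, hf, e⟩ := poly_lift d (by omega) P hP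
    have := hrel2 f hf
    rw [e] at this
    simpa using this
  -- polynomial vanishing doubly at the other points
  have hW : ∀ s ∈ T, ∃ W : Polynomial k, W.natDegree ≤ 4 * d - 4 ∧ W.eval s ≠ 0 ∧
      ∀ t ∈ T, t ≠ s → W.eval t = 0 ∧ (Polynomial.derivative W).eval t = 0 := by
    intro s hs
    refine ⟨(∏ r ∈ T.erase s, (Polynomial.X - Polynomial.C r)) ^ 2, ?_, ?_, ?_⟩
    · rw [Polynomial.natDegree_pow,
        Polynomial.natDegree_prod_of_monic _ _ fun r _ => Polynomial.monic_X_sub_C r]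
      simp [Finset.card_erase_of_mem hs]
      omega
    · rw [Polynomial.eval_pow, Polynomial.eval_prod]
      refine pow_ne_zero _ (Finset.prod_ne_zero_iff.2 fun r hr => ?_)
      simpa using sub_ne_zero.2 (Finset.ne_of_mem_erase hr).symm
    · intro t ht hts
      have hz : (∏ r ∈ T.erase s, (Polynomial.X - Polynomial.C r)).eval t = 0 := by
        rw [Polynomial.eval_prod]
        exact Finset.prod_eq_zero (Finset.mem_erase.2 ⟨hts, ht⟩) (by simp)
      constructor
      · rw [Polynomial.eval_pow, hz]; simp
      · rw [Polynomial.derivative_pow]; simp [hz]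
  have hβ : ∀ s ∈ T, β s = 0 := by
    intro s hs
    obtain ⟨W, hd1, hs1, hW⟩ := hW s hs
    have h := hrel3 (W * (Polynomial.X - Polynomial.C s)) (by
      have := Polynomial.natDegree_mul_le (p := W) (q := Polynomial.X - Polynomial.C s)
      rw [Polynomial.natDegree_X_sub_C] at this
      omega)
    rw [Finset.sum_eq_single s] at h
    · simpa [hs1, h0T s hs] using h
    · intro t ht hts
      obtain ⟨w1, w2⟩ := hW t ht hts
      simp [w1, w2]
    · intro h; exact absurd hs h
  have hα : ∀ s ∈ T, α s = 0 := by
    intro s hs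
    obtain ⟨W, hd1, hs1, hW⟩ := hW s hs
    have h := hrel3 W (by omega)
    rw [Finset.sum_eq_single s] at h
    · have hd0 : (d : k) ≠ 0 := Nat.cast_ne_zero.2 (by omega)
      simpa [hs1, h0T s hs, hβ s hs, hd0] using h
    · intro t ht hts
      obtain ⟨w1, w2⟩ := hW t ht hts
      simp [w1, w2]
    · intro h; exact absurd hs h
  apply LinearMap.ext
  intro x
  have := hc fun t => if h : t ∈ T then x ⟨t, h⟩ else 0
  have hx : (fun t : T => if h : (t : k) ∈ T then x ⟨t, h⟩ else 0) = x := by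
    funext t
    rw [dif_pos t.2]
  rw [hx] at this
  rw [LinearMap.zero_apply]
  refine this.trans (Finset.sum_eq_zero fun t ht => Finset.sum_eq_zero fun i _ => ?_)
  rw [hαβ t ht, hα t ht, hβ t ht]
  simp

/-- sums of powers over the roots of unity. -/
lemma sum_pow {N : ℕ} {z : k} (hz : IsPrimitiveRoot z N) (j : ℕ) :
    ∑ i ∈ Finset.range N, (z ^ i) ^ j = if N ∣ j then (N : k) else 0 := by
  have e : ∀ i, (z ^ i) ^ j = (z ^ j) ^ i := fun i => by rw [← pow_mul, ← pow_mul, mul_comm]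
  simp only [e]
  split_ifs with h
  · rw [(hz.pow_eq_one_iff_dvd j).2 h]; simp
  · have h1 : z ^ j - 1 ≠ 0 := sub_ne_zero.2 fun h' => h ((hz.pow_eq_one_iff_dvd j).1 h')
    apply mul_left_cancel₀ h1
    rw [mul_geom_sum, ← pow_mul, mul_comm j, pow_mul, hz.pow_eq_one]
    simp

lemma dependency {d : ℕ} (hd : 1 ≤ d) {z : k} (hz : IsPrimitiveRoot z (2 * d))
    {f : MvPolynomial (Fin 4) k} (hf : f.IsHomogeneous d) :
    ∑ j ∈ Finset.range (2 * d), ∑ i,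
      ((z ^ j) * dgam (z ^ j) i - 2 * gam (z ^ j) i) * eval (gam (z ^ j)) (pderiv i f) = 0 := by
  set F := aeval (Gam k) f with hF
  obtain ⟨hdeg, hco⟩ := coeff_aeval hf
  rw [← hF] at hdeg hco
  have e : ∀ t : k, ∑ i, (t * dgam t i - 2 * gam t i) * eval (gam t) (pderiv i f) =
      ∑ n ∈ Finset.range (4 * d + 1), ((n : k) - 2 * d) * F.coeff n * t ^ n := by
    intro t
    have h1 : ∑ i, (t * dgam t i - 2 * gam t i) * eval (gam t) (pderiv i f) =
        t * (Polynomial.derivative F).eval t - 2 * (d * F.eval t) := by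
      rw [hF, eval_aeval, ← euler hf, eval_deriv_aeval, Finset.mul_sum, Finset.mul_sum,
        ← Finset.sum_sub_distrib]
      exact Finset.sum_congr rfl fun i _ => by ring
    have h2 : F = ∑ n ∈ Finset.range (4 * d + 1), Polynomial.C (F.coeff n) * Polynomial.X ^ n :=
      F.as_sum_range_C_mul_X_pow' (by omega)
    rw [h1]
    conv_lhs => rw [h2]
    rw [Polynomial.derivative_sum, Polynomial.eval_finsetSum, Polynomial.eval_finsetSum,
      Finset.mul_sum, Finset.mul_sum, Finset.mul_sum, ← Finset.sum_sub_distrib]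
    refine Finset.sum_congr rfl fun n _ => ?_
    rcases n with _ | n
    · simp; ring
    · simp; ring
  simp only [e]
  rw [Finset.sum_comm]
  simp only [← Finset.mul_sum, sum_pow hz]
  have hsub : ({0, 2 * d, 4 * d} : Finset ℕ) ⊆ Finset.range (4 * d + 1) := by
    intro n hn
    simp at hn ⊢
    omega
  rw [← Finset.sum_subset hsub]
  · rw [Finset.sum_insert (by simp; omega), Finset.sum_insert (by simp; omega),
      Finset.sum_singleton, if_pos (dvd_zero _), if_pos dvd_rfl,
      if_pos ⟨2, by ring⟩, hco]
    push_cast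
    ring
  · intro n hn hn'
    rw [if_neg, mul_zero]
    rintro ⟨m, rfl⟩
    simp at hn hn'
    have : m < 3 := by
      by_contra hm
      have : 2 * d * 3 ≤ 2 * d * m := Nat.mul_le_mul_left _ (by omega)
      omega
    interval_cases m <;> omega

lemma not_surj {d : ℕ} (hd : 1 ≤ d) {z : k} (hz : IsPrimitiveRoot z (2 * d)) (T : Finset k)
    (hT : ∀ (g : k → k), ∑ t ∈ T, g t = ∑ j ∈ Finset.range (2 * d), g (z ^ j))
    (h1T : 1 ∈ T) :
    LinearMap.range (Phi d T) ≠ ⊤ := by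
  classical
  intro h
  obtain ⟨f, hf⟩ := LinearMap.range_eq_top.1 h
    (Pi.single (⟨1, h1T⟩ : T) (Pi.single (1 : Fin 4) 1))
  have hdep := dependency hd hz f.2
  rw [← hT fun t => ∑ i, (t * dgam t i - 2 * gam t i) * eval (gam t) (pderiv i f.1)] at hdep
  have hv : ∀ t ∈ T, ∀ i, eval (gam t) (pderiv i f.1) = if t = 1 ∧ i = 1 then 1 else 0 := by
    intro t ht i
    rw [← Phi_apply d T f ⟨t, ht⟩ i, hf]
    by_cases h1 : t = 1
    · subst h1; simp [Pi.single_apply]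
    · simp [Pi.single_apply, h1]
  rw [Finset.sum_eq_single 1] at hdep
  · simp only [hv 1 h1T] at hdep
    simp [gam, dgam] at hdep
    norm_num at hdep
  · intro t ht ht1
    refine Finset.sum_eq_zero fun i _ => ?_
    rw [hv t ht]; simp [ht1]
  · intro h; exact absurd h1T h

lemma spans [DecidableEq (ProjSpace k 3)] (T : Finset k) (hT : 4 < T.card) :
    Spans k 3 (T.image pt) := by
  rw [Spans]
  by_contra hne
  obtain ⟨φ, hφ, hle⟩ := Submodule.exists_le_ker_of_lt_top _ (lt_top_iff_ne_top.2 hne)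
  apply hφ
  have hz : ∀ t ∈ T, φ (gam t) = 0 := by
    intro t ht
    obtain ⟨a, ha⟩ := Projectivization.exists_smul_eq_mk_rep k (gam t) (gam_ne_zero t)
    have h1 : φ (pt t).rep = 0 := hle (Submodule.subset_span
      ⟨pt t, by simpa using ⟨t, ht, rfl⟩, rfl⟩)
    have h2 : (pt t).rep = (a : k) • gam t := ha.symm
    rw [h2, map_smul, smul_eq_mul] at h1
    exact (mul_eq_zero.1 h1).resolve_left a.ne_zero
  have hco : ∀ v : Fin 4 → k, φ v = ∑ i, v i * φ (Pi.single i 1) := by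
    intro v
    conv_lhs => rw [pi_eq_sum_univ' v]
    simp [map_sum]
  set a := φ (Pi.single 0 1)
  set b := φ (Pi.single 1 1)
  set c := φ (Pi.single 2 1)
  set e := φ (Pi.single 3 1)
  let P : Polynomial k := Polynomial.C a * Polynomial.X ^ 4 + Polynomial.C e * Polynomial.X ^ 3 +
    Polynomial.C c * Polynomial.X ^ 2 + Polynomial.C b * Polynomial.X + Polynomial.C a
  have hP : P = 0 := by
    apply Polynomial.eq_zero_of_natDegree_lt_card_of_eval_eq_zero' P T
    · intro t ht
      have := hz t ht
      rw [hco, Fin.sum_univ_four] at this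
      simp [gam] at this
      simp [P]
      linear_combination this
    · refine lt_of_le_of_lt ?_ hT
      simp only [P]
      compute_degree!
  have c0 : a = 0 := by
    have := congrArg (fun Q => Polynomial.coeff Q 0) hP
    simpa [P] using this
  have c1 : b = 0 := by
    have := congrArg (fun Q => Polynomial.coeff Q 1) hP
    simpa [P, Polynomial.coeff_X, Polynomial.coeff_C, Polynomial.coeff_X_pow] using this
  have c2 : c = 0 := by
    have := congrArg (fun Q => Polynomial.coeff Q 2) hP
    simpa [P, Polynomial.coeff_X, Polynomial.coeff_C, Polynomial.coeff_X_pow] using this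
  have c3 : e = 0 := by
    have := congrArg (fun Q => Polynomial.coeff Q 3) hP
    simpa [P, Polynomial.coeff_X, Polynomial.coeff_C, Polynomial.coeff_X_pow] using this
  apply LinearMap.ext
  intro v
  rw [hco, Fin.sum_univ_four]
  change _ * a + _ * b + _ * c + _ * e = 0
  simp [c0, c1, c2, c3]

lemma choose_big (d : ℕ) (hd : 5 ≤ d) : 8 * d < (3 + d).choose 3 := by
  induction d, hd using Nat.le_induction with
  | base => decide
  | succ d hd ih =>
    rw [show 3 + (d + 1) = (3 + d) + 1 by ring, Nat.choose_succ_succ' (3 + d) 2]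
    have : (8 : ℕ).choose 2 ≤ (3 + d).choose 2 := Nat.choose_le_choose 2 (by omega)
    have h8 : (8 : ℕ).choose 2 = 28 := by decide
    simp only [Nat.reduceAdd] at *
    omega

end
end MinTerr

/-- Example: for every `d ≥ 5` there exists a minimally Terracini set of `2d` points in
`P^3` with respect to `O(d)`; in particular the bound `x < 2d` in the emptiness theorem
for `T(3,d;x)'` is sharp. -/
theorem minTerracini_P3_two_d_nonempty
    (k : Type*) [Field k] [IsAlgClosed k] [CharZero k]
    (d : ℕ) (hd : 5 ≤ d) :
    (minTerracini k 3 d (2 * d)).Nonempty := by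
  classical
  have : NeZero ((2 * d : ℕ) : k) := ⟨Nat.cast_ne_zero.2 (by omega)⟩
  obtain ⟨z, hz⟩ := HasEnoughRootsOfUnity.exists_primitiveRoot k (2 * d)
  have hinj : Set.InjOn (fun j => z ^ j) (Finset.range (2 * d) : Set ℕ) := by
    intro i hi j hj h
    exact hz.pow_inj (by simpa using hi) (by simpa using hj) h
  set T : Finset k := (Finset.range (2 * d)).image fun j => z ^ j with hT
  have hcard : T.card = 2 * d := by
    rw [hT, Finset.card_image_of_injOn hinj, Finset.card_range]
  have hsum : ∀ g : k → k, ∑ t ∈ T, g t = ∑ j ∈ Finset.range (2 * d), g (z ^ j) := by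
    intro g
    rw [hT, Finset.sum_image hinj]
  have h1T : (1 : k) ∈ T := Finset.mem_image.2 ⟨0, by simp; omega, by simp⟩
  have h0T : ∀ t ∈ T, t ≠ 0 := by
    intro t ht
    obtain ⟨j, _, rfl⟩ := Finset.mem_image.1 ht
    exact pow_ne_zero _ (hz.ne_zero (by omega))
  have hrank : Module.finrank k (LinearMap.range (MinTerr.Phi d T)) < 4 * T.card := by
    rw [← MinTerr.finrank_target T]
    exact Submodule.finrank_lt (MinTerr.not_surj (by omega) hz T hsum h1T)
  refine ⟨T.image MinTerr.pt, ⟨?_, MinTerr.spans T (by omega), ?_, ?_⟩, ?_⟩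
  · rw [Finset.card_image_of_injective _ MinTerr.pt_injective, hcard]
  · have := MinTerr.rank_add (k := k) (d := d) (by omega) T
    have := MinTerr.choose_big d hd
    omega
  · rw [MinTerr.h1_eq (by omega)]
    omega
  · intro A hA
    obtain ⟨U, hU, rfl⟩ := Finset.subset_image_iff.1 hA.subset
    have hUT : U.card < T.card := by
      have := Finset.card_lt_card hA
      rwa [Finset.card_image_of_injective _ MinTerr.pt_injective,
        Finset.card_image_of_injective _ MinTerr.pt_injective] at this
    rw [MinTerr.h1_eq (by omega), MinTerr.surj hd U (fun t ht => h0T t (hU ht)) (by omega),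
      finrank_top, MinTerr.finrank_target]
    push_cast
    ring
end
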